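/- arXiv:2502.18396 — 3 statements merged into one kernel-verified Lean document; each statement's English description precedes it below -/
import Mathlib

section
/- Let Δ be a Cohen-Macaulay simplicial forest on vertex set V(Δ), let R = K[x_v : v ∈ V(Δ)] be a polynomial ring over a field K, and let F be a special leaf of Δ. Then for each 1 ≤ k ≤ ν(Δ), depth(R/(I(Δ)^{[k]} + ⟨x_F⟩)) = |V(Δ)| − ν(Δ) + k − 1. -/
open MvPolynomial

/-- A simplicial complex on the vertex set `V`, presented by its set of facets
(the maximal faces).  Every facet is nonempty and no facet contains another. -/
structure SimplicialComplexOn (V : Type) [Fintype V] [DecidableEq V] : Type where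
  facets : Finset (Finset V)
  nonempty_facet : ∀ F ∈ facets, F.Nonempty
  antichain : ∀ F ∈ facets, ∀ G ∈ facets, F ⊆ G → F = G

variable {V : Type} [Fintype V] [DecidableEq V]

/-- `F` is a leaf of the collection of facets `S`: either `F` is the only facet, or
there is a facet `G ≠ F` (a joint) with `F ∩ H ⊆ F ∩ G` for every facet `H ≠ F`. -/
def IsLeafOf (S : Finset (Finset V)) (F : Finset V) : Prop :=
  F ∈ S ∧ ((∀ H ∈ S, H = F) ∨
    ∃ G ∈ S, G ≠ F ∧ ∀ H ∈ S, H ≠ F → F ∩ H ⊆ F ∩ G)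

/-- The forest property for a facet collection: every nonempty subcollection
(i.e. every nonempty subcomplex) has a leaf. -/
def HasLeafProp (S : Finset (Finset V)) : Prop :=
  ∀ T ⊆ S, T.Nonempty → ∃ F, IsLeafOf T F

/-- A good leaf: a facet which is a leaf of every subcomplex containing it. -/
def IsGoodLeafOf (S : Finset (Finset V)) (F : Finset V) : Prop :=
  F ∈ S ∧ ∀ T ⊆ S, F ∈ T → IsLeafOf T F

/-- A special leaf: a leaf `F` such that for all facets `H, H' ≠ F`,
`H ∩ H' ≠ ∅` iff `(H ∩ H') \ F ≠ ∅`. -/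
def IsSpecialLeafOf (S : Finset (Finset V)) (F : Finset V) : Prop :=
  IsLeafOf S F ∧ ∀ H ∈ S, ∀ H' ∈ S, H ≠ F → H' ≠ F →
    ((H ∩ H').Nonempty ↔ ((H ∩ H') \ F).Nonempty)

/-- A matching: a subcollection of the facets that is pairwise disjoint. -/
def IsMatchingOf (S : Finset (Finset V)) (M : Finset (Finset V)) : Prop :=
  M ⊆ S ∧ ∀ F ∈ M, ∀ G ∈ M, F ≠ G → F ∩ G = ∅

/-- The matching number: maximum size of a matching. -/
noncomputable def matchingNumberOf (S : Finset (Finset V)) : ℕ :=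
  sSup {n | ∃ M : Finset (Finset V), IsMatchingOf S M ∧ M.card = n}

/-- The facet collection `S` is grafted: it decomposes as `Fs ∪ Gs` where
(1) every vertex of a `G ∈ Gs` lies in some `F ∈ Fs`, (2) `Fs` is exactly the set
of leaves of `S`, (3) `Fs` and `Gs` are disjoint, (4) the members of `Fs` are
pairwise disjoint, and (5) for each `G ∈ Gs`, deleting the facet `G` leaves a
grafted collection. -/
inductive IsGrafted : Finset (Finset V) → Prop where
  | intro (S Fs Gs : Finset (Finset V))
      (hunion : S = Fs ∪ Gs)
      (hdisj : Disjoint Fs Gs)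
      (hcover : ∀ G ∈ Gs, ∀ v ∈ G, ∃ F ∈ Fs, v ∈ F)
      (hleaves : ∀ F, IsLeafOf S F ↔ F ∈ Fs)
      (hFdisj : ∀ F ∈ Fs, ∀ F' ∈ Fs, F ≠ F' → F ∩ F' = ∅)
      (hrec : ∀ G ∈ Gs, IsGrafted (S.erase G)) :
      IsGrafted S

/-- `S` is the (minimal presentation of the) grafting of the collection `Gs`
with the simplices `Fs`. -/
def IsGraftingDecomp (S Fs Gs : Finset (Finset V)) : Prop :=
  S = Fs ∪ Gs ∧ Disjoint Fs Gs ∧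
  (∀ G ∈ Gs, ∀ v ∈ G, ∃ F ∈ Fs, v ∈ F) ∧
  (∀ F, IsLeafOf S F ↔ F ∈ Fs) ∧
  (∀ F ∈ Fs, ∀ F' ∈ Fs, F ≠ F' → F ∩ F' = ∅) ∧
  (∀ G ∈ Gs, IsGrafted (S.erase G))

/-- A Cohen-Macaulay simplicial forest, combinatorially: a grafted simplicial forest. -/
def IsCMForestFacets (S : Finset (Finset V)) : Prop :=
  HasLeafProp S ∧ IsGrafted S

/-- The closed neighborhood `N[F] = {F} ∪ {G ∈ S : G ≠ F, G ∩ F ≠ ∅}`. -/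
def closedNbhd (S : Finset (Finset V)) (F : Finset V) : Finset (Finset V) :=
  insert F (S.filter fun G => G ≠ F ∧ (G ∩ F).Nonempty)

/-- The contraction of the facet collection `S` on `A`: the minimal members of
`{F \ A : F ∈ S}`. -/
def contraction (S : Finset (Finset V)) (A : Finset V) : Finset (Finset V) :=
  (S.image fun F => F \ A).filter fun F' => ∀ G ∈ S, G \ A ⊆ F' → G \ A = F'

variable (K : Type) [Field K]

/-- The square-free monomial `x_S = ∏_{v ∈ S} x_v`. -/
noncomputable def xMon (S : Finset V) : MvPolynomial V K := ∏ v ∈ S, X v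

/-- The facet ideal `I(Δ) = ⟨x_F : F a facet⟩`. -/
noncomputable def facetIdealOf (S : Finset (Finset V)) : Ideal (MvPolynomial V K) :=
  Ideal.span { p | ∃ F ∈ S, p = xMon K F }

/-- The `k`-th square-free power of an ideal: the ideal generated by all
square-free monomials lying in `I ^ k`. -/
noncomputable def sqfreePow (I : Ideal (MvPolynomial V K)) (k : ℕ) :
    Ideal (MvPolynomial V K) :=
  Ideal.span { p | (∃ S : Finset V, p = xMon K S) ∧ p ∈ I ^ k }

/-- The depth of `R/I` with respect to the homogeneous maximal ideal
`m = ⟨x_v : v ∈ V⟩`: the largest length of an `R/I`-regular sequence of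
elements of `m`. -/
noncomputable def gradedDepth (I : Ideal (MvPolynomial V K)) : ℕ :=
  sSup {n | ∃ rs : List (MvPolynomial V K), rs.length = n ∧
    (∀ r ∈ rs, r ∈ Ideal.span (Set.range (X : V → MvPolynomial V K))) ∧
    RingTheory.Sequence.IsRegular (MvPolynomial V K ⧸ I) rs}

/-- `R/I` is Cohen-Macaulay: its depth equals its Krull dimension. -/
def IsCMQuot (I : Ideal (MvPolynomial V K)) : Prop :=
  ((gradedDepth K I : ℕ∞) : WithBot ℕ∞) = ringKrullDim (MvPolynomial V K ⧸ I)

open MvPolynomial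
namespace CMF
set_option linter.unusedSectionVars false
variable {V : Type} [Fintype V] [DecidableEq V] (K : Type) [Field K]

/-- Ideal generated by the square-free monomials of a family. -/
noncomputable def sq (𝒢 : Set (Finset V)) : Ideal (MvPolynomial V K) :=
  Ideal.span (xMon K '' 𝒢)

noncomputable def ex (S : Finset V) : V →₀ ℕ := ∑ v ∈ S, Finsupp.single v 1

lemma ex_apply (S : Finset V) (v : V) : ex S v = if v ∈ S then 1 else 0 := by
  simp [ex, Finsupp.finsetSum_apply, Finsupp.single_apply]

lemma ex_le_iff (S : Finset V) (m : V →₀ ℕ) : ex S ≤ m ↔ S ⊆ m.support := by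
  constructor
  · intro h v hv
    have := h v
    rw [ex_apply, if_pos hv] at this
    rw [Finsupp.mem_support_iff]; omega
  · intro h v
    rw [ex_apply]
    split_ifs with hv
    · have := Finsupp.mem_support_iff.1 (h hv); omega
    · exact Nat.zero_le _

lemma xMon_eq (S : Finset V) : xMon K S = monomial (ex S) 1 := by
  rw [xMon, ex, monomial_sum_one]; rfl

lemma mem_sq {𝒢 : Set (Finset V)} {f : MvPolynomial V K} :
    f ∈ sq K 𝒢 ↔ ∀ m ∈ f.support, ∃ G ∈ 𝒢, G ⊆ m.support := by
  have : xMon K '' 𝒢 = (fun s => monomial s (1 : K)) '' (ex '' 𝒢) := by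
    rw [Set.image_image]; exact Set.image_congr fun S _ => xMon_eq K S
  rw [sq, this, mem_ideal_span_monomial_image]
  simp [ex_le_iff]

lemma xMon_mem_sq {𝒢 : Set (Finset V)} {S : Finset V} :
    xMon K S ∈ sq K 𝒢 ↔ ∃ G ∈ 𝒢, G ⊆ S := by
  have hs : (ex S).support = S := by
    ext v; rw [Finsupp.mem_support_iff, ex_apply]; simp
  rw [mem_sq, xMon_eq]
  simp [hs]

lemma sq_le {𝒢 𝒢' : Set (Finset V)} (h : ∀ G ∈ 𝒢, ∃ G' ∈ 𝒢', G' ⊆ G) : sq K 𝒢 ≤ sq K 𝒢' := by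
  rw [sq, Ideal.span_le]
  rintro _ ⟨G, hG, rfl⟩
  exact (xMon_mem_sq K).2 (h G hG)

lemma sq_congr {𝒢 𝒢' : Set (Finset V)} (h : ∀ G ∈ 𝒢, ∃ G' ∈ 𝒢', G' ⊆ G)
    (h' : ∀ G ∈ 𝒢', ∃ G' ∈ 𝒢, G' ⊆ G) : sq K 𝒢 = sq K 𝒢' :=
  le_antisymm (sq_le K h) (sq_le K h')

lemma sq_insert (𝒢 : Set (Finset V)) (X : Finset V) :
    sq K (insert X 𝒢) = sq K 𝒢 ⊔ Ideal.span {xMon K X} := by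
  rw [sq, Set.image_insert_eq, Ideal.span_insert, sup_comm, sq]

lemma mul_mem_sq {𝒢 : Set (Finset V)} {X : Finset V} {f : MvPolynomial V K} :
    f * xMon K X ∈ sq K 𝒢 ↔ f ∈ sq K ((fun G => G \ X) '' 𝒢) := by
  rw [mem_sq, mem_sq, xMon_eq]
  have hadd : ∀ m : V →₀ ℕ, (m + ex X).support = m.support ∪ X := by
    intro m; ext v
    simp only [Finsupp.mem_support_iff, Finset.mem_union, Finsupp.add_apply, ex_apply]
    split_ifs with h <;> simp [h]
  constructor
  · intro h m hm
    have : m + ex X ∈ (f * monomial (ex X) 1).support := by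
      rw [mem_support_iff, coeff_mul_monomial, mul_one]; exact mem_support_iff.1 hm
    obtain ⟨G, hG, hGm⟩ := h _ this
    refine ⟨G \ X, ⟨G, hG, rfl⟩, ?_⟩
    rw [hadd] at hGm
    intro v hv
    have := Finset.mem_sdiff.1 hv
    exact (Finset.mem_union.1 (hGm this.1)).resolve_right this.2
  · intro h n hn
    rw [mem_support_iff, coeff_mul_monomial'] at hn
    split_ifs at hn with hle
    · rw [mul_one] at hn
      obtain ⟨_, ⟨G, hG, rfl⟩, hGm⟩ := h _ (mem_support_iff.2 hn)
      refine ⟨G, hG, ?_⟩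
      have hn' : n = (n - ex X) + ex X := (tsub_add_cancel_of_le hle).symm
      rw [hn', hadd]
      intro v hv
      by_cases hvX : v ∈ X
      · exact Finset.mem_union_right _ hvX
      · exact Finset.mem_union_left _ (hGm (Finset.mem_sdiff.2 ⟨hv, hvX⟩))
    · exact absurd rfl hn

section modules
open RingTheory.Sequence Function
open scoped Pointwise
universe u
variable {R : Type u} [CommRing R]

lemma isWeaklyRegular_ext (rs : List R) : ∀ {M₁ M₂ M₃ : Type u} [AddCommGroup M₁]
    [AddCommGroup M₂] [AddCommGroup M₃] [Module R M₁] [Module R M₂] [Module R M₃]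
    (f : M₁ →ₗ[R] M₂) (g : M₂ →ₗ[R] M₃), Injective f → Exact f g → Surjective g →
    IsWeaklyRegular M₁ rs → IsWeaklyRegular M₃ rs → IsWeaklyRegular M₂ rs := by
  induction rs with
  | nil => intros; exact IsWeaklyRegular.nil R _
  | cons r rs ih =>
    intro M₁ M₂ M₃ _ _ _ _ _ _ f g hf hfg hg h1 h3
    rw [isWeaklyRegular_cons_iff] at h1 h3 ⊢
    refine ⟨isSMulRegular_of_range_eq_ker hf hfg.linearMap_ker_eq.symm h1.1 h3.1, ?_⟩
    refine ih (QuotSMulTop.map r f) (QuotSMulTop.map r g) ?_ (QuotSMulTop.map_exact r hfg hg)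
      (QuotSMulTop.map_surjective r hg) h1.2 h3.2
    have h0 : Exact (0 : PUnit.{u+1} →ₗ[R] M₁) f := by
      rw [LinearMap.exact_zero_iff_injective]; exact hf
    have := QuotSMulTop.map_first_exact_on_four_term_exact_of_isSMulRegular_last h0 hfg h3.1
    rw [map_zero, LinearMap.exact_zero_iff_injective] at this
    exact this

lemma isWeaklyRegular_split (rs : List R) (I C : Ideal R) (x : R)
    (hC : ∀ f, f ∈ C ↔ f * x ∈ I)
    (h1 : IsWeaklyRegular (R ⧸ C) rs) (h2 : IsWeaklyRegular (R ⧸ (I ⊔ Ideal.span {x})) rs) :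
    IsWeaklyRegular (R ⧸ I) rs := by
  let f : (R ⧸ C) →ₗ[R] (R ⧸ I) := Submodule.mapQ C I (LinearMap.mulRight R x)
    (fun y hy => (hC y).1 hy)
  let g : (R ⧸ I) →ₗ[R] (R ⧸ (I ⊔ Ideal.span {x})) := Submodule.factor le_sup_left
  refine isWeaklyRegular_ext rs f g ?_ ?_ ?_ h1 h2
  · rw [← LinearMap.ker_eq_bot, LinearMap.ker_eq_bot']
    intro m
    obtain ⟨m, rfl⟩ := Submodule.Quotient.mk_surjective _ m
    intro h
    have : (Submodule.Quotient.mk (m * x) : R ⧸ I) = 0 := h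
    rw [Submodule.Quotient.mk_eq_zero] at this ⊢
    exact (hC m).2 this
  · intro y
    obtain ⟨y, rfl⟩ := Submodule.Quotient.mk_surjective _ y
    have e1 : g (Submodule.Quotient.mk y) = Submodule.Quotient.mk y := rfl
    rw [e1, Submodule.Quotient.mk_eq_zero]
    constructor
    · intro h
      obtain ⟨a, ha, b, hb, rfl⟩ := Submodule.mem_sup.1 h
      obtain ⟨c, rfl⟩ := Ideal.mem_span_singleton'.1 hb
      refine ⟨Submodule.Quotient.mk c, ?_⟩
      change (Submodule.Quotient.mk (c * x) : R ⧸ I) = _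
      rw [eq_comm, Submodule.Quotient.eq]
      simpa using ha
    · rintro ⟨c, hc⟩
      obtain ⟨c, rfl⟩ := Submodule.Quotient.mk_surjective _ c
      change (Submodule.Quotient.mk (c * x) : R ⧸ I) = _ at hc
      rw [eq_comm, Submodule.Quotient.eq] at hc
      have : y = (y - c * x) + c * x := by ring
      rw [this]
      exact Submodule.add_mem_sup hc (Ideal.mem_span_singleton'.2 ⟨c, rfl⟩)
  · exact Submodule.factor_surjective _

lemma isWeaklyRegular_quot_cons (r : R) (rs : List R) (I J : Ideal R)
    (hJ : I ⊔ Ideal.span {r} = J) (hr : ∀ f, f * r ∈ I → f ∈ I)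
    (h : IsWeaklyRegular (R ⧸ J) rs) : IsWeaklyRegular (R ⧸ I) (r :: rs) := by
  subst hJ
  rw [isWeaklyRegular_cons_iff]
  constructor
  · rw [isSMulRegular_quotient_iff_mem_of_smul_mem]
    intro x hx
    rw [smul_eq_mul, mul_comm] at hx
    exact hr x hx
  · have e : (R ⧸ (I ⊔ Ideal.span {r})) ≃ₗ[R] QuotSMulTop r (R ⧸ I) := by
      refine LinearEquiv.trans (Submodule.quotEquivOfEq _ _ ?_)
        (Submodule.quotientQuotientEquivQuotientSup I (Ideal.span {r})).symm ≪≫ₗ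
        Submodule.quotEquivOfEq _ _ ?_
      · rfl
      · have : Ideal.span {r} = r • (⊤ : Submodule R R) := by
          rw [← Submodule.ideal_span_singleton_smul]; simp
        rw [this, Submodule.map_pointwise_smul, Submodule.map_top, Submodule.range_mkQ]
    exact (e.isWeaklyRegular_congr rs).1 h

end modules
end CMF

open MvPolynomial
namespace CMF
set_option linter.unusedSectionVars false
variable {V : Type} [Fintype V] [DecidableEq V] (K : Type) [Field K]
open RingTheory.Sequence

/-- The sequence of elementary symmetric polynomials `e_d, ..., e_1`. -/
noncomputable def th : ℕ → List (MvPolynomial V K)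
  | 0 => []
  | (d + 1) => esymm V K (d + 1) :: th d

def Q (d : ℕ) (𝒢 : Set (Finset V)) : Prop :=
  IsWeaklyRegular (MvPolynomial V K ⧸ sq K 𝒢) (th K d : List (MvPolynomial V K))

variable {K}

lemma Q_congr {d : ℕ} {𝒢 𝒢' : Set (Finset V)} (h : ∀ G ∈ 𝒢, ∃ G' ∈ 𝒢', G' ⊆ G)
    (h' : ∀ G ∈ 𝒢', ∃ G' ∈ 𝒢, G' ⊆ G) (hq : Q K d 𝒢) : Q K d 𝒢' := by
  unfold Q at *
  rwa [← sq_congr K h h']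

lemma Q_top {d : ℕ} {𝒢 : Set (Finset V)} (h : ∅ ∈ 𝒢) : Q K d 𝒢 := by
  have : sq K 𝒢 = ⊤ := by
    rw [Ideal.eq_top_iff_one]
    have : xMon K (∅ : Finset V) ∈ sq K 𝒢 := (xMon_mem_sq K).2 ⟨∅, h, le_rfl⟩
    simpa [xMon] using this
  unfold Q
  rw [this]
  have : Subsingleton (MvPolynomial V K ⧸ (⊤ : Ideal (MvPolynomial V K))) :=
    Ideal.Quotient.subsingleton_iff.2 rfl
  generalize (th K d : List (MvPolynomial V K)) = rs
  refine ⟨fun i hi => ?_⟩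
  intro a b _
  exact Subsingleton.elim _ _

lemma Q_split {d : ℕ} {𝒢 : Set (Finset V)} (X : Finset V)
    (h1 : Q K d ((fun G => G \ X) '' 𝒢)) (h2 : Q K d (insert X 𝒢)) : Q K d 𝒢 := by
  unfold Q at *
  refine isWeaklyRegular_split _ _ _ (xMon K X) (fun f => ?_) h1 ?_
  · rw [mul_mem_sq]
  · rwa [← sq_insert]

/-- The singletons of a set of vertices. -/
def sing (A : Finset V) : Set (Finset V) := (fun v => {v}) '' (A : Set V)

lemma mem_sing {A : Finset V} {G : Finset V} : G ∈ sing A ↔ ∃ v ∈ A, G = {v} := by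
  simp only [sing, Set.mem_image, Finset.mem_coe]
  constructor
  · rintro ⟨v, hv, rfl⟩; exact ⟨v, hv, rfl⟩
  · rintro ⟨v, hv, rfl⟩; exact ⟨v, hv, rfl⟩

lemma sq_sing_insert (A X : Finset V) (hX : X = Aᶜ) :
    sq K (sing A) ⊔ Ideal.span {esymm V K X.card} = sq K (insert X (sing A)) := by
  rw [sq_insert]
  have key : esymm V K X.card - xMon K X ∈ sq K (sing A) := by
    rw [esymm, ← Finset.sum_erase_add _ _ (a := X) (by simp [Finset.mem_powersetCard]), xMon,
      add_sub_cancel_right]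
    refine Ideal.sum_mem _ fun S hS => ?_
    rw [Finset.mem_erase, Finset.mem_powersetCard] at hS
    have : ∃ v ∈ S, v ∈ A := by
      by_contra hcon
      push Not at hcon
      apply hS.1
      refine Finset.eq_of_subset_of_card_le (fun v hv => ?_) hS.2.2.ge
      rw [hX, Finset.mem_compl]; exact hcon v hv
    obtain ⟨v, hv, hvA⟩ := this
    exact (xMon_mem_sq K).2 ⟨{v}, mem_sing.2 ⟨v, hvA, rfl⟩, by simpa using hv⟩
  apply le_antisymm
  · refine sup_le le_sup_left ?_
    rw [Ideal.span_singleton_le_iff_mem]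
    have : esymm V K X.card = (esymm V K X.card - xMon K X) + xMon K X := by ring
    rw [this]
    exact Submodule.add_mem_sup key (Ideal.mem_span_singleton_self _)
  · refine sup_le le_sup_left ?_
    rw [Ideal.span_singleton_le_iff_mem]
    have : xMon K X = -(esymm V K X.card - xMon K X) + esymm V K X.card := by ring
    rw [this]
    exact Submodule.add_mem_sup (neg_mem key) (Ideal.mem_span_singleton_self _)

lemma Q_base (d : ℕ) : ∀ A : Finset V, d + A.card = Fintype.card V → Q K d (sing A) := by
  induction d with
  | zero => intro A _; exact IsWeaklyRegular.nil _ _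
  | succ d ih =>
    intro A hA
    have aux : ∀ X : Finset V, Disjoint X A → Q K d (insert X (sing A)) := by
      intro X
      induction X using Finset.induction_on with
      | empty => intro _; exact Q_top (Set.mem_insert _ _)
      | insert v X hv ihX =>
        intro hd
        rw [Finset.disjoint_insert_left] at hd
        refine Q_split {v} ?_ ?_
        · refine Q_congr ?_ ?_ (ihX hd.2)
          · intro G hG
            rcases hG with rfl | hG
            · refine ⟨_, ⟨_, Set.mem_insert _ _, rfl⟩, ?_⟩
              intro w hw
              simp only [Finset.mem_sdiff, Finset.mem_insert, Finset.mem_singleton] at hw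
              tauto
            · exact ⟨_, ⟨G, Set.mem_insert_of_mem _ hG, rfl⟩, Finset.sdiff_subset⟩
          · rintro _ ⟨G, hG, rfl⟩
            rcases hG with rfl | hG
            · refine ⟨_, Set.mem_insert _ _, ?_⟩
              intro w hw
              simp only [Finset.mem_sdiff, Finset.mem_insert, Finset.mem_singleton]
              exact ⟨Or.inr hw, fun h => hv (h ▸ hw)⟩
            · refine ⟨G, Set.mem_insert_of_mem _ hG, ?_⟩
              obtain ⟨a, ha, rfl⟩ := mem_sing.1 hG
              intro w hw
              simp only [Finset.mem_sdiff, Finset.mem_singleton] at hw ⊢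
              exact ⟨hw, fun h => hd.1 (by rw [← h, hw]; exact ha)⟩
        · refine Q_congr ?_ ?_ (ih (insert v A) ?_)
          · intro G hG
            obtain ⟨a, ha, rfl⟩ := mem_sing.1 hG
            rcases Finset.mem_insert.1 ha with rfl | ha
            · exact ⟨_, Set.mem_insert _ _, le_rfl⟩
            · exact ⟨_, Set.mem_insert_of_mem _ (Set.mem_insert_of_mem _ (mem_sing.2 ⟨a, ha, rfl⟩)),
                le_rfl⟩
          · intro G hG
            rcases hG with rfl | rfl | hG
            · exact ⟨_, mem_sing.2 ⟨v, by simp, rfl⟩, le_rfl⟩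
            · exact ⟨_, mem_sing.2 ⟨v, by simp, rfl⟩, by simp⟩
            · obtain ⟨a, ha, rfl⟩ := mem_sing.1 hG
              exact ⟨_, mem_sing.2 ⟨a, by simp [ha], rfl⟩, le_rfl⟩
          · rw [Finset.card_insert_of_notMem hd.1]; omega
    have hc : (Aᶜ).card = d + 1 := by rw [Finset.card_compl]; omega
    have h1 := sq_sing_insert (K := K) A Aᶜ rfl
    have h2 := aux Aᶜ disjoint_compl_left
    rw [hc] at h1
    unfold Q at *
    refine isWeaklyRegular_quot_cons _ _ _ _ h1 ?_ h2
    intro f hf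
    have h3 : f * xMon K Aᶜ ∈ sq K (sing A) := by
      have : xMon K Aᶜ ∈ sq K (sing A) ⊔ Ideal.span {esymm V K (d + 1)} := by
        rw [h1, sq_insert]
        exact Ideal.mem_sup_right (Ideal.mem_span_singleton_self _)
      obtain ⟨a, ha, b, hb, hab⟩ := Submodule.mem_sup.1 this
      obtain ⟨c, rfl⟩ := Ideal.mem_span_singleton'.1 hb
      rw [← hab, mul_add]
      refine add_mem (Ideal.mul_mem_left _ _ ha) ?_
      rw [show f * (c * esymm V K (d+1)) = c * (f * esymm V K (d+1)) by ring]
      exact Ideal.mul_mem_left _ _ hf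
    rw [mul_mem_sq] at h3
    refine sq_le K ?_ h3
    rintro _ ⟨G, hG, rfl⟩
    obtain ⟨a, ha, rfl⟩ := mem_sing.1 hG
    refine ⟨_, hG, ?_⟩
    intro w hw
    simp only [Finset.mem_sdiff, Finset.mem_singleton, Finset.mem_compl] at hw ⊢
    subst hw
    exact ⟨rfl, fun h => h ha⟩

/-! upper bound -/

lemma length_le_supportDim {R : Type} [CommRing R] [IsNoetherianRing R] (rs : List R) :
    ∀ (M : Type) [AddCommGroup M] [Module R M] [Module.Finite R M],
    IsRegular M rs → ((rs.length : ℕ) : WithBot ℕ∞) ≤ Module.supportDim R M := by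
  induction rs with
  | nil =>
    intro M _ _ _ h
    have := h.nontrivial
    have : Nonempty (Module.support R M) := Module.nonempty_support_of_nontrivial.to_subtype
    simpa [Module.supportDim] using Order.krullDim_nonneg
  | cons r rs ih =>
    intro M _ _ _ h
    rw [isRegular_cons_iff] at h
    have h1 := ih _ h.2
    have h2 := Module.supportDim_quotSMulTop_succ_le_of_notMem_minimalPrimes (M := M) (x := r)
      (fun _ => h.1.notMem_of_mem_minimalPrimes)
    refine le_trans ?_ h2
    rw [List.length_cons]; push_cast
    gcongr

lemma dim_quot_le (A : Finset V) :
    ringKrullDim (MvPolynomial V K ⧸ sq K (sing A)) ≤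
      ((Fintype.card V - A.card : ℕ) : WithBot ℕ∞) := by
  let ψ : MvPolynomial {v // v ∉ A} K →ₐ[K] (MvPolynomial V K ⧸ sq K (sing A)) :=
    (Ideal.Quotient.mkₐ K (sq K (sing A))).comp (rename Subtype.val)
  let φ : MvPolynomial V K →ₐ[K] MvPolynomial {v // v ∉ A} K :=
    aeval (fun v => if h : v ∉ A then X ⟨v, h⟩ else 0)
  have hcomp : ψ.comp φ = Ideal.Quotient.mkₐ K (sq K (sing A)) := by
    apply MvPolynomial.algHom_ext
    intro v
    by_cases h : v ∈ A
    · have : Ideal.Quotient.mk (sq K (sing A)) (X v) = 0 := by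
        rw [Ideal.Quotient.eq_zero_iff_mem]
        have := (xMon_mem_sq K (𝒢 := sing A) (S := {v})).2 ⟨{v}, mem_sing.2 ⟨v, h, rfl⟩, le_rfl⟩
        simpa [xMon] using this
      simp [φ, ψ, h, this]
    · simp [φ, ψ, h]
  have hsurj : Function.Surjective ψ := by
    intro y
    obtain ⟨f, rfl⟩ := Ideal.Quotient.mk_surjective y
    refine ⟨φ f, ?_⟩
    exact DFunLike.congr_fun hcomp f
  have := ringKrullDim_le_of_surjective ψ.toRingHom hsurj
  refine this.trans ?_
  rw [MvPolynomial.ringKrullDim_of_isNoetherianRing, ringKrullDim_eq_zero_of_field]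
  simp [Fintype.card_subtype_compl]

lemma dim_le (I : Ideal (MvPolynomial V K)) (d : ℕ)
    (h : ∀ P : Ideal (MvPolynomial V K), P.IsPrime → I ≤ P → ∃ A : Finset V,
      Fintype.card V ≤ d + A.card ∧ ∀ v ∈ A, X v ∈ P) :
    ringKrullDim (MvPolynomial V K ⧸ I) ≤ (d : WithBot ℕ∞) := by
  rw [ringKrullDim_quotient]
  refine iSup_le fun l => ?_
  obtain ⟨A, hA, hAP⟩ := h l.head.1.asIdeal l.head.1.isPrime l.head.2
  have hle : sq K (sing A) ≤ l.head.1.asIdeal := by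
    rw [sq, Ideal.span_le]
    rintro _ ⟨G, hG, rfl⟩
    obtain ⟨v, hv, rfl⟩ := mem_sing.1 hG
    simpa [xMon] using hAP v hv
  have hd := dim_quot_le (K := K) A
  rw [ringKrullDim_quotient] at hd
  let l' : LTSeries (PrimeSpectrum.zeroLocus (R := MvPolynomial V K) (sq K (sing A))) :=
    { length := l.length
      toFun := fun i => ⟨(l i).1, fun x hx => (LTSeries.head_le l i : l.head ≤ l i) (hle hx)⟩
      step := fun i => l.step i }
  have h1 : ((l.length : ℕ) : WithBot ℕ∞) ≤ _ := Order.LTSeries.length_le_krullDim l'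
  refine h1.trans (hd.trans ?_)
  norm_cast
  omega

end CMF

open MvPolynomial
namespace CMF
set_option linter.unusedSectionVars false
variable {V : Type} [Fintype V] [DecidableEq V]

/-- A family which is connected outside `E` admits a joint for `E`. -/
lemma exists_joint (S : Finset (Finset V)) (hS : HasLeafProp S) (E W : Finset V) (hE : E ∈ S)
    (n : ℕ) : ∀ X : Finset (Finset V), X.card = n → X ⊆ S → E ∉ X → X.Nonempty →
    (∀ A ⊆ X, A.Nonempty → A ≠ X → ∃ a ∈ A, ∃ b ∈ X, b ∉ A ∧ ∃ w ∈ W, w ∈ a ∧ w ∈ b ∧ w ∉ E) →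
    ∃ H ∈ X, ∀ H' ∈ X, ∀ w ∈ E, w ∈ H' → w ∈ H := by
  induction n with
  | zero =>
    intro X hX _ _ hne
    rw [Finset.card_eq_zero] at hX
    exact absurd hX hne.ne_empty
  | succ n ih =>
    intro X hcard hXS hEX hne hconn
    obtain ⟨L, hLU, hL⟩ := hS (insert E X) (Finset.insert_subset hE hXS) (Finset.insert_nonempty _ _)
    obtain ⟨x0, hx0⟩ := hne
    have hx0E : x0 ≠ E := fun h => hEX (h ▸ hx0)
    by_cases hLE : L = E
    · subst hLE
      rcases hL with hL | ⟨G, hG, hGL, hL⟩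
      · exact absurd (hL x0 (Finset.mem_insert_of_mem hx0)) hx0E
      · refine ⟨G, (Finset.mem_insert.1 hG).resolve_left hGL, fun H' hH' w hw hw' => ?_⟩
        have := hL H' (Finset.mem_insert_of_mem hH') (fun h => hEX (h ▸ hH'))
          (Finset.mem_inter.2 ⟨hw, hw'⟩)
        exact (Finset.mem_inter.1 this).2
    · have hLX : L ∈ X := (Finset.mem_insert.1 hLU).resolve_left hLE
      rcases hL with hL | ⟨G, hG, hGL, hL⟩
      · exact absurd (hL E (Finset.mem_insert_self _ _)).symm hLE
      have hL' : ∀ H ∈ insert E X, H ≠ L → ∀ w ∈ L, w ∈ H → w ∈ G := fun H hH hHL w h1 h2 =>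
        (Finset.mem_inter.1 (hL H hH hHL (Finset.mem_inter.2 ⟨h1, h2⟩))).2
      by_cases hGE : G = E
      · subst hGE
        have hX : {L} = X := by
          by_contra hcon
          obtain ⟨a, ha, b, hb, hba, w, _, hwa, hwb, hwE⟩ :=
            hconn {L} (by simpa using hLX) (Finset.singleton_nonempty _) hcon
          rw [Finset.mem_singleton] at ha hba
          subst ha
          exact hwE (hL' b (Finset.mem_insert_of_mem hb) hba w hwa hwb)
        refine ⟨L, hLX, fun H' hH' w _ hw' => ?_⟩
        rw [← hX, Finset.mem_singleton] at hH'
        exact hH' ▸ hw'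
      · have hGX : G ∈ X := (Finset.mem_insert.1 hG).resolve_left hGE
        obtain ⟨Hs, hHs, hmax⟩ := ih (X.erase L) (by rw [Finset.card_erase_of_mem hLX, hcard]; rfl)
          ((Finset.erase_subset _ _).trans hXS) (fun h => hEX (Finset.mem_of_mem_erase h))
          ⟨G, Finset.mem_erase.2 ⟨hGL, hGX⟩⟩ (by
            intro A hA hAne hAX
            have hLA : L ∉ A := fun h => (Finset.mem_erase.1 (hA h)).1 rfl
            by_cases hGA : G ∈ A
            · obtain ⟨a, ha, b, hb, hba, w, hwW, hwa, hwb, hwE⟩ := hconn (insert L A)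
                (Finset.insert_subset hLX (hA.trans (Finset.erase_subset _ _)))
                (Finset.insert_nonempty _ _) (by
                  intro h; apply hAX; rw [← h, Finset.erase_insert hLA])
              rw [Finset.mem_insert, not_or] at hba
              rcases Finset.mem_insert.1 ha with rfl | ha
              · exact ⟨G, hGA, b, Finset.mem_erase.2 ⟨hba.1, hb⟩, hba.2, w, hwW,
                  hL' b (Finset.mem_insert_of_mem hb) hba.1 w hwa hwb, hwb, hwE⟩
              · exact ⟨a, ha, b, Finset.mem_erase.2 ⟨hba.1, hb⟩, hba.2, w, hwW, hwa, hwb, hwE⟩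
            · obtain ⟨a, ha, b, hb, hba, w, hwW, hwa, hwb, hwE⟩ := hconn A
                (hA.trans (Finset.erase_subset _ _)) hAne (by rintro rfl; exact hLA hLX)
              by_cases hbL : b = L
              · subst hbL
                exact ⟨a, ha, G, Finset.mem_erase.2 ⟨hGL, hGX⟩, hGA, w, hwW, hwa,
                  hL' a (Finset.mem_insert_of_mem (Finset.mem_of_mem_erase (hA ha)))
                    (fun h => hLA (h ▸ ha)) w hwb hwa, hwE⟩
              · exact ⟨a, ha, b, Finset.mem_erase.2 ⟨hbL, hb⟩, hba, w, hwW, hwa, hwb, hwE⟩)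
        refine ⟨Hs, Finset.mem_of_mem_erase hHs, fun H' hH' w hw hw' => ?_⟩
        by_cases hH'L : H' = L
        · subst hH'L
          exact hmax G (Finset.mem_erase.2 ⟨hGL, hGX⟩) w hw
            (hL' E (Finset.mem_insert_self _ _) (Ne.symm hLE) w hw' hw)
        · exact hmax H' (Finset.mem_erase.2 ⟨hH'L, hH'⟩) w hw hw'

def Nest (W : Finset V) (T : Finset (Finset V)) (v : V) : Prop :=
  ∀ H ∈ T, ∀ H' ∈ T, v ∈ H → v ∈ H' →
    (∀ w ∈ W, w ∈ H → w ∈ H') ∨ (∀ w ∈ W, w ∈ H' → w ∈ H)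

lemma nest_outside (S : Finset (Finset V)) (hS : HasLeafProp S) (n : ℕ) :
    ∀ (W : Finset V) (T : Finset (Finset V)), T.card ≤ n → T ⊆ S → ∀ E ∈ T,
    (∃ v ∈ W, v ∉ E) → ∃ v ∈ W, v ∉ E ∧ Nest W T v := by
  induction n with
  | zero =>
    intro W T hT _ E hE
    rw [Nat.le_zero, Finset.card_eq_zero] at hT
    simp [hT] at hE
  | succ n ih =>
    intro W T hcard hTS E hE ⟨v0, hv0W, hv0E⟩
    -- closed subfamilies
    let cl : Finset (Finset V) → Prop := fun X => X.Nonempty ∧ X ⊆ T ∧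
      (∀ H ∈ X, ∃ w ∈ W, w ∈ H ∧ w ∉ E) ∧
      ∀ H ∈ X, ∀ H' ∈ T, (∃ w ∈ W, w ∈ H ∧ w ∈ H' ∧ w ∉ E) → H' ∈ X
    by_cases hex : ∃ H ∈ T, ∃ w ∈ W, w ∈ H ∧ w ∉ E
    swap
    · refine ⟨v0, hv0W, hv0E, fun H hH H' _ hv _ => ?_⟩
      exact absurd ⟨H, hH, v0, hv0W, hv, hv0E⟩ hex
    have hcl : ∃ X, cl X := by
      classical
      refine ⟨T.filter (fun H => ∃ w ∈ W, w ∈ H ∧ w ∉ E), ?_, Finset.filter_subset _ _, ?_, ?_⟩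
      · obtain ⟨H, hH, h⟩ := hex
        exact ⟨H, Finset.mem_filter.2 ⟨hH, h⟩⟩
      · intro H hH; exact (Finset.mem_filter.1 hH).2
      · rintro H hH H' hH' ⟨w, h1, h2, h3, h4⟩
        exact Finset.mem_filter.2 ⟨hH', w, h1, h3, h4⟩
    obtain ⟨X, hX, hmin⟩ : ∃ X, cl X ∧ ∀ X', cl X' → X.card ≤ X'.card := by
      classical
      have hne : ∃ m, ∃ X, cl X ∧ X.card = m := ⟨_, hcl.choose, hcl.choose_spec, rfl⟩
      obtain ⟨X, hX, hXm⟩ := Nat.find_spec hne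
      exact ⟨X, hX, fun X' hX' => hXm ▸ Nat.find_min' hne ⟨X', hX', rfl⟩⟩
    obtain ⟨hXne, hXT, hXout, hXcl⟩ := hX
    have hEX : E ∉ X := by
      intro h
      obtain ⟨w, _, h1, h2⟩ := hXout E h
      exact h2 h1
    obtain ⟨Hs, hHs, hmax⟩ := exists_joint S hS E W (hTS hE) X.card X rfl (hXT.trans hTS) hEX hXne (by
      intro A hAX hAne hA
      by_contra hcon
      push Not at hcon
      have : cl A := by
        refine ⟨hAne, hAX.trans hXT, fun H hH => hXout H (hAX hH), ?_⟩
        rintro H hH H' hH' ⟨w, h1, h2, h3, h4⟩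
        by_contra hH'A
        exact h4 (hcon H hH H' (hXcl H (hAX hH) H' hH' ⟨w, h1, h2, h3, h4⟩) hH'A w h1 h2 h3)
      exact hA (Finset.eq_of_subset_of_card_le hAX (hmin A this)))
    classical
    let W' := W.filter (fun w => ∃ H ∈ X, w ∈ H)
    have hW' : ∀ w, w ∈ W' ↔ w ∈ W ∧ ∃ H ∈ X, w ∈ H := fun w => Finset.mem_filter
    -- transfer
    have transfer : ∀ v ∈ W', v ∉ E → Nest W' X v → ∃ v ∈ W, v ∉ E ∧ Nest W T v := by
      intro v hv hvE hN
      obtain ⟨hvW, H0, hH0, hvH0⟩ := (hW' v).1 hv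
      refine ⟨v, hvW, hvE, fun H hH H' hH' h1 h2 => ?_⟩
      have hHX := hXcl H0 hH0 H hH ⟨v, hvW, hvH0, h1, hvE⟩
      have hHX' := hXcl H0 hH0 H' hH' ⟨v, hvW, hvH0, h2, hvE⟩
      rcases hN H hHX H' hHX' h1 h2 with h | h
      · exact Or.inl fun w hw hwH => h w ((hW' w).2 ⟨hw, H, hHX, hwH⟩) hwH
      · exact Or.inr fun w hw hwH => h w ((hW' w).2 ⟨hw, H', hHX', hwH⟩) hwH
    by_cases hcase : ∃ v ∈ W', v ∉ Hs
    · have hXcard : X.card ≤ n := by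
        have : X ⊂ T := ⟨hXT, fun h => hEX (h hE)⟩
        have := Finset.card_lt_card this
        omega
      obtain ⟨v, hv, hvH, hN⟩ := ih W' X hXcard (hXT.trans hTS) Hs hHs hcase
      refine transfer v hv (fun hvE => ?_) hN
      obtain ⟨_, H, hH, hvH'⟩ := (hW' v).1 hv
      exact hvH (hmax H hH v hvE hvH')
    · push Not at hcase
      have hHE : Hs ≠ E := fun h => hEX (h ▸ hHs)
      have hsub : insert E (X.erase Hs) ⊆ T.erase Hs := by
        intro H hH
        rcases Finset.mem_insert.1 hH with rfl | hH
        · exact Finset.mem_erase.2 ⟨hHE.symm, hE⟩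
        · exact Finset.mem_erase.2 ⟨(Finset.mem_erase.1 hH).1, hXT (Finset.mem_erase.1 hH).2⟩
      have hc : (insert E (X.erase Hs)).card ≤ n := by
        have h1 := Finset.card_le_card hsub
        rw [Finset.card_erase_of_mem (hXT hHs)] at h1
        omega
      obtain ⟨w, hwW, hwH, hwE⟩ := hXout Hs hHs
      obtain ⟨v, hv, hvE, hN⟩ := ih W' _ hc
        (hsub.trans ((Finset.erase_subset _ _).trans hTS)) E (Finset.mem_insert_self _ _)
        ⟨w, (hW' w).2 ⟨hwW, Hs, hHs, hwH⟩, hwE⟩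
      refine transfer v hv hvE ?_
      intro H hH H' hH' h1 h2
      by_cases e1 : H = Hs
      · subst e1
        exact Or.inr fun w hw _ => hcase w hw
      by_cases e2 : H' = Hs
      · subst e2
        exact Or.inl fun w hw _ => hcase w hw
      exact hN H (Finset.mem_insert_of_mem (Finset.mem_erase.2 ⟨e1, hH⟩)) H'
        (Finset.mem_insert_of_mem (Finset.mem_erase.2 ⟨e2, hH'⟩)) h1 h2

lemma exists_nest (S : Finset (Finset V)) (hS : HasLeafProp S) (W : Finset V)
    (T : Finset (Finset V)) (hT : T ⊆ S) (hW : W.Nonempty) : ∃ v ∈ W, Nest W T v := by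
  by_cases h : ∃ E ∈ T, ∃ v ∈ W, v ∉ E
  · obtain ⟨E, hE, hv⟩ := h
    obtain ⟨v, hv, _, hN⟩ := nest_outside S hS _ W T le_rfl hT E hE hv
    exact ⟨v, hv, hN⟩
  · push Not at h
    obtain ⟨v, hv⟩ := hW
    exact ⟨v, hv, fun H _ H' hH' _ _ => Or.inl fun w hw _ => h H' hH' w hw⟩

/-- If the traces on `B` form a chain there is a vertex in all the members meeting `B`. -/
lemma exists_common (B : Finset V) (T : Finset (Finset V)) (hB : B.Nonempty)
    (hchain : ∀ H ∈ T, ∀ H' ∈ T, (∀ w ∈ B, w ∈ H → w ∈ H') ∨ (∀ w ∈ B, w ∈ H' → w ∈ H)) :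
    ∃ v ∈ B, ∀ H ∈ T, (∃ w ∈ B, w ∈ H) → v ∈ H := by
  classical
  by_cases hne : (T.filter (fun H => (H ∩ B).Nonempty)).Nonempty
  · obtain ⟨H, hH, hmin⟩ := Finset.exists_min_image _ (fun H => (H ∩ B).card) hne
    rw [Finset.mem_filter] at hH
    obtain ⟨v, hv⟩ := hH.2
    refine ⟨v, (Finset.mem_inter.1 hv).2, ?_⟩
    rintro H' hH' ⟨w, hwB, hwH'⟩
    rcases hchain H hH.1 H' hH' with h | h
    · exact h v (Finset.mem_inter.1 hv).2 (Finset.mem_inter.1 hv).1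
    · have hs : H' ∩ B ⊆ H ∩ B := fun x hx => by
        rw [Finset.mem_inter] at hx ⊢
        exact ⟨h x hx.2 hx.1, hx.2⟩
      have := Finset.eq_of_subset_of_card_le hs
        (hmin H' (Finset.mem_filter.2 ⟨hH', w, Finset.mem_inter.2 ⟨hwH', hwB⟩⟩))
      rw [← this] at hv
      exact (Finset.mem_inter.1 hv).1
  · obtain ⟨v, hv⟩ := hB
    refine ⟨v, hv, ?_⟩
    rintro H hH ⟨w, hw, hwH⟩
    exact absurd ⟨H, Finset.mem_filter.2 ⟨hH, w, Finset.mem_inter.2 ⟨hwH, hw⟩⟩⟩ hne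

/-- Structure of grafted complexes. -/
lemma grafted_structure {S : Finset (Finset V)} (h : IsGrafted S)
    (hne : ∀ F ∈ S, F.Nonempty) (hanti : ∀ F ∈ S, ∀ G ∈ S, F ⊆ G → F = G) :
    ∃ Fs ⊆ S, (∀ F, IsLeafOf S F ↔ F ∈ Fs) ∧ (∀ F ∈ Fs, ∀ F' ∈ Fs, F ≠ F' → F ∩ F' = ∅) ∧
      (∀ H ∈ S, ∀ v ∈ H, ∃ F ∈ Fs, v ∈ F) ∧
      (∀ B ∈ Fs, ∀ H ∈ S, ∀ H' ∈ S,
        (∀ w ∈ B, w ∈ H → w ∈ H') ∨ (∀ w ∈ B, w ∈ H' → w ∈ H)) := by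
  induction h with
  | intro S Fs Gs hunion hdisj hcover hleaves hFdisj hrec ih =>
    have hFsS : Fs ⊆ S := hunion ▸ Finset.subset_union_left
    refine ⟨Fs, hFsS, hleaves, hFdisj, ?_, ?_⟩
    · intro H hH v hv
      rw [hunion, Finset.mem_union] at hH
      rcases hH with hH | hH
      · exact ⟨H, hH, hv⟩
      · exact hcover H hH v hv
    · intro B hB H hH H' hH'
      have hBS := hFsS hB
      have triv : ∀ J ∈ Fs, ∀ w ∈ B, w ∈ J → J = B := by
        intro J hJ w hw hwJ
        by_contra hne'
        have := hFdisj J hJ B hB hne'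
        have : w ∈ J ∩ B := Finset.mem_inter.2 ⟨hwJ, hw⟩
        simp_all
      by_cases e1 : H ∈ Fs
      · by_cases e : H = B
        · subst e; exact Or.inr fun w hw _ => hw
        · exact Or.inl fun w hw hwH => absurd (triv H e1 w hw hwH) e
      by_cases e2 : H' ∈ Fs
      · by_cases e : H' = B
        · subst e; exact Or.inl fun w hw _ => hw
        · exact Or.inr fun w hw hwH => absurd (triv H' e2 w hw hwH) e
      by_cases e3 : H = H'
      · subst e3; exact Or.inl fun w _ h => h
      have hBH : H ≠ B := fun h => e1 (h ▸ hB)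
      have hBH' : H' ≠ B := fun h => e2 (h ▸ hB)
      by_cases e4 : ∃ G ∈ Gs, G ≠ H ∧ G ≠ H'
      · obtain ⟨G, hG, hGH, hGH'⟩ := e4
        obtain ⟨Fs', hFs'S, _, _, hcov', hch'⟩ := ih G hG
          (fun F hF => hne F (Finset.mem_of_mem_erase hF))
          (fun F hF G' hG' => hanti F (Finset.mem_of_mem_erase hF) G' (Finset.mem_of_mem_erase hG'))
        have hfree : ∃ v ∈ B, ∀ J ∈ S, v ∈ J → J = B := by
          obtain ⟨_, hl | ⟨J, hJ, hJB, hl⟩⟩ := (hleaves B).2 hB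
          · obtain ⟨v, hv⟩ := hne B hBS
            exact ⟨v, hv, fun J hJ _ => hl J hJ⟩
          · have : ¬ B ⊆ J := fun h => hJB (hanti B hBS J hJ h).symm
            obtain ⟨v, hv, hvJ⟩ := Finset.not_subset.1 this
            refine ⟨v, hv, fun J' hJ' hvJ' => ?_⟩
            by_contra hcon
            exact hvJ (Finset.mem_inter.1 (hl J' hJ' hcon (Finset.mem_inter.2 ⟨hv, hvJ'⟩))).2
        obtain ⟨v, hvB, hv⟩ := hfree
        have hBG : B ≠ G := by
          rintro rfl
          exact (Finset.disjoint_left.1 hdisj) hB hG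
        obtain ⟨F', hF', hvF'⟩ := hcov' B (Finset.mem_erase.2 ⟨hBG, hBS⟩) v hvB
        have := hv F' (Finset.mem_of_mem_erase (hFs'S hF')) hvF'
        subst this
        exact hch' F' hF' H (Finset.mem_erase.2 ⟨hGH.symm, hH⟩) H' (Finset.mem_erase.2 ⟨hGH'.symm, hH'⟩)
      · push Not at e4
        obtain ⟨_, hl | ⟨J, hJ, hJB, hl⟩⟩ := (hleaves B).2 hB
        · exact absurd (hl H hH) hBH
        · have hl' : ∀ X ∈ S, X ≠ B → ∀ w ∈ B, w ∈ X → w ∈ J := fun X hX hXB w h1 h2 =>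
            (Finset.mem_inter.1 (hl X hX hXB (Finset.mem_inter.2 ⟨h1, h2⟩))).2
          by_cases eJ : J ∈ Fs
          · left
            intro w hw hwH
            exact absurd (triv J eJ w hw (hl' H hH hBH w hw hwH)) hJB
          · have hJG : J ∈ Gs := by
              rw [hunion, Finset.mem_union] at hJ
              exact hJ.resolve_left eJ
            by_cases eJH : J = H
            · subst eJH
              exact Or.inr (hl' H' hH' hBH')
            · have := e4 J hJG eJH
              subst this
              exact Or.inl (hl' H hH hBH)

end CMF

open MvPolynomial
namespace CMF
set_option linter.unusedSectionVars false
variable {V : Type} [Fintype V] [DecidableEq V] {K : Type} [Field K]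

/-- Union of a family. -/
def un (M : Finset (Finset V)) : Finset V := M.biUnion id

lemma mem_un {M : Finset (Finset V)} {v : V} : v ∈ un M ↔ ∃ H ∈ M, v ∈ H := by
  simp [un]

/-- Families of `k` members of `T` that are pairwise disjoint inside `U`. -/
def mset (U : Finset V) (T : Finset (Finset V)) (k : ℕ) : Set (Finset (Finset V)) :=
  {M | M ⊆ T ∧ M.card = k ∧ ∀ H ∈ M, ∀ H' ∈ M, H ≠ H' → ∀ w ∈ U, w ∈ H → w ∉ H'}

def mg (A U : Finset V) (T : Finset (Finset V)) (k : ℕ) : Set (Finset V) :=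
  sing A ∪ (fun M => un M ∩ U) '' mset U T k

def fl (A U Y X : Finset V) (T : Finset (Finset V)) (k : ℕ) : Set (Finset V) :=
  insert X (sing A ∪ (fun M => un M ∩ (U ∪ Y)) '' mset U T k)

lemma mem_mg {A U : Finset V} {T : Finset (Finset V)} {k : ℕ} {G : Finset V} :
    G ∈ mg A U T k ↔ (∃ v ∈ A, G = {v}) ∨ ∃ M ∈ mset U T k, un M ∩ U = G := by
  simp only [mg, Set.mem_union, mem_sing, Set.mem_image]

lemma mem_fl {A U Y X : Finset V} {T : Finset (Finset V)} {k : ℕ} {G : Finset V} :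
    G ∈ fl A U Y X T k ↔ G = X ∨ (∃ v ∈ A, G = {v}) ∨ ∃ M ∈ mset U T k, un M ∩ (U ∪ Y) = G := by
  simp only [fl, Set.mem_insert_iff, Set.mem_union, mem_sing, Set.mem_image]

lemma flagged (d : ℕ) (A U : Finset V) (T : Finset (Finset V)) (k : ℕ) (n : ℕ) :
    ∀ X Y : Finset V, X.card = n → X ⊆ Y →
    (∀ H ∈ T, ∀ H' ∈ T, (∀ w ∈ Y, w ∈ H → w ∈ H') ∨ (∀ w ∈ Y, w ∈ H' → w ∈ H)) →
    (∀ H ∈ T, ∀ w ∈ Y, w ∈ H → w ∈ X) → (∀ w ∈ Y, w ∉ A) → (∀ w ∈ Y, w ∉ U) →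
    (∀ v ∈ Y, ∀ T0 ⊆ T, (∀ H ∈ T, (∀ w ∈ Y, w ∉ H) → H ∈ T0) → Q K d (mg (insert v A) U T0 k)) →
    Q K d (fl A U Y X T k) := by
  induction n with
  | zero =>
    intro X Y hX _ _ _ _ _ _
    rw [Finset.card_eq_zero] at hX
    exact Q_top (mem_fl.2 (Or.inl hX.symm))
  | succ n ih =>
    intro X Y hX hXY hch hTX hYA hYU hfl
    have hXne : X.Nonempty := Finset.card_pos.1 (by omega)
    obtain ⟨v, hvX, hv⟩ := exists_common X T hXne (fun H hH H' hH' =>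
      (hch H hH H' hH').imp (fun h w hw => h w (hXY hw)) (fun h w hw => h w (hXY hw)))
    have hvY := hXY hvX
    refine Q_split {v} ?_ ?_
    · have h1 := ih (X.erase v) (Y.erase v) (by rw [Finset.card_erase_of_mem hvX]; omega)
        (Finset.erase_subset_erase v hXY)
        (fun H hH H' hH' => (hch H hH H' hH').imp
          (fun h w hw => h w (Finset.mem_of_mem_erase hw))
          (fun h w hw => h w (Finset.mem_of_mem_erase hw)))
        (fun H hH w hw hwH => Finset.mem_erase.2 ⟨Finset.ne_of_mem_erase hw,
          hTX H hH w (Finset.mem_of_mem_erase hw) hwH⟩)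
        (fun w hw => hYA w (Finset.mem_of_mem_erase hw))
        (fun w hw => hYU w (Finset.mem_of_mem_erase hw))
        (fun w hw T0 hT0 h => hfl w (Finset.mem_of_mem_erase hw) T0 hT0
          (fun H hH h' => h H hH (fun w hw => h' w (Finset.mem_of_mem_erase hw))))
      have e : ∀ M : Finset (Finset V), (un M ∩ (U ∪ Y)) \ {v} = un M ∩ (U ∪ Y.erase v) := by
        intro M
        ext w
        have : w = v → w ∉ U := fun h => h ▸ hYU v hvY
        simp only [Finset.mem_sdiff, Finset.mem_inter, Finset.mem_union, Finset.mem_singleton,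
          Finset.mem_erase]
        tauto
      have e2 : ∀ a ∈ A, ({a} : Finset V) \ {v} = {a} := by
        intro a ha
        rw [Finset.sdiff_singleton_eq_erase, Finset.erase_eq_of_notMem]
        rw [Finset.mem_singleton]
        rintro rfl
        exact hYA _ hvY ha
      refine Q_congr ?_ ?_ h1
      · intro G hG
        refine ⟨G, ?_, le_rfl⟩
        rcases mem_fl.1 hG with rfl | ⟨a, ha, rfl⟩ | ⟨M, hM, rfl⟩
        · exact ⟨X, mem_fl.2 (Or.inl rfl), by simp [Finset.sdiff_singleton_eq_erase]⟩
        · exact ⟨{a}, mem_fl.2 (Or.inr (Or.inl ⟨a, ha, rfl⟩)), e2 a ha⟩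
        · exact ⟨_, mem_fl.2 (Or.inr (Or.inr ⟨M, hM, rfl⟩)), e M⟩
      · rintro _ ⟨G, hG, rfl⟩
        refine ⟨G \ {v}, ?_, le_rfl⟩
        rcases mem_fl.1 hG with rfl | ⟨a, ha, rfl⟩ | ⟨M, hM, rfl⟩
        · exact mem_fl.2 (Or.inl (by simp [Finset.sdiff_singleton_eq_erase]))
        · exact mem_fl.2 (Or.inr (Or.inl ⟨a, ha, e2 a ha⟩))
        · exact mem_fl.2 (Or.inr (Or.inr ⟨M, hM, (e M).symm⟩))
    · have hq := hfl v hvY (T.filter fun H => v ∉ H) (Finset.filter_subset _ _)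
        (fun H hH h => Finset.mem_filter.2 ⟨hH, h v hvY⟩)
      refine Q_congr ?_ ?_ hq
      · intro G hG
        rcases mem_mg.1 hG with ⟨a, ha, rfl⟩ | ⟨M, hM, rfl⟩
        · rcases Finset.mem_insert.1 ha with rfl | ha
          · exact ⟨{a}, Or.inl rfl, le_rfl⟩
          · exact ⟨{a}, Or.inr (mem_fl.2 (Or.inr (Or.inl ⟨a, ha, rfl⟩))), le_rfl⟩
        · refine ⟨_, Or.inr (mem_fl.2 (Or.inr (Or.inr
            ⟨M, ⟨hM.1.trans (Finset.filter_subset _ _), hM.2⟩, rfl⟩))), ?_⟩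
          intro w hw
          obtain ⟨hw1, hw2⟩ := Finset.mem_inter.1 hw
          refine Finset.mem_inter.2 ⟨hw1, ?_⟩
          refine (Finset.mem_union.1 hw2).resolve_right fun hwY => ?_
          obtain ⟨H, hH, hwH⟩ := mem_un.1 hw1
          obtain ⟨hHT, hvH⟩ := Finset.mem_filter.1 (hM.1 hH)
          exact hvH (hv H hHT ⟨w, hTX H hHT w hwY hwH, hwH⟩)
      · intro G hG
        rcases hG with rfl | hG
        · exact ⟨{v}, mem_mg.2 (Or.inl ⟨v, Finset.mem_insert_self _ _, rfl⟩), le_rfl⟩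
        rcases mem_fl.1 hG with rfl | ⟨a, ha, rfl⟩ | ⟨M, hM, rfl⟩
        · exact ⟨{v}, mem_mg.2 (Or.inl ⟨v, Finset.mem_insert_self _ _, rfl⟩), by simpa using hvX⟩
        · exact ⟨{a}, mem_mg.2 (Or.inl ⟨a, Finset.mem_insert_of_mem ha, rfl⟩), le_rfl⟩
        · by_cases h : ∃ H ∈ M, v ∈ H
          · refine ⟨{v}, mem_mg.2 (Or.inl ⟨v, Finset.mem_insert_self _ _, rfl⟩), ?_⟩
            rw [Finset.singleton_subset_iff]
            exact Finset.mem_inter.2 ⟨mem_un.2 h, Finset.mem_union_right _ hvY⟩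
          · refine ⟨_, mem_mg.2 (Or.inr ⟨M, ⟨fun H hH => Finset.mem_filter.2 ⟨hM.1 hH,
              fun hvH => h ⟨H, hH, hvH⟩⟩, hM.2⟩, rfl⟩), ?_⟩
            exact Finset.inter_subset_inter_left Finset.subset_union_left

/-- A family of pairwise disjoint members has at most as many members as there are blocks. -/
lemma card_bound (𝔅 T : Finset (Finset V)) (hne : ∀ B ∈ 𝔅, B.Nonempty)
    (hch : ∀ B ∈ 𝔅, ∀ H ∈ T, ∀ H' ∈ T,
      (∀ w ∈ B, w ∈ H → w ∈ H') ∨ (∀ w ∈ B, w ∈ H' → w ∈ H))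
    (hT : ∀ H ∈ T, ∃ w ∈ un 𝔅, w ∈ H) (k : ℕ) (M : Finset (Finset V))
    (hM : M ∈ mset (un 𝔅) T k) : k ≤ 𝔅.card := by
  have h2 : ∀ H ∈ M, ∃ B ∈ 𝔅, ∃ w ∈ B, w ∈ H := by
    intro H hH
    obtain ⟨w, hw, hwH⟩ := hT H (hM.1 hH)
    obtain ⟨B, hB, hwB⟩ := mem_un.1 hw
    exact ⟨B, hB, w, hwB, hwH⟩
  choose! b hb1 hb2 using h2
  rw [← hM.2.1]
  refine Finset.card_le_card_of_injOn b (fun H hH => hb1 H hH) ?_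
  intro H hH H' hH' e
  by_contra hne'
  obtain ⟨c, hcB, hc⟩ := exists_common (b H) T (hne _ (hb1 H hH)) (hch _ (hb1 H hH))
  exact hM.2.2 H hH H' hH' hne' c (mem_un.2 ⟨_, hb1 H hH, hcB⟩)
    (hc H (hM.1 hH) (hb2 H hH)) (hc H' (hM.1 hH') (e ▸ hb2 H' hH'))

lemma main_ends (𝔅 T : Finset (Finset V)) (hne : ∀ B ∈ 𝔅, B.Nonempty)
    (hch : ∀ B ∈ 𝔅, ∀ H ∈ T, ∀ H' ∈ T,
      (∀ w ∈ B, w ∈ H → w ∈ H') ∨ (∀ w ∈ B, w ∈ H' → w ∈ H))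
    (hT : ∀ H ∈ T, ∃ w ∈ un 𝔅, w ∈ H) (A : Finset V) (d k : ℕ)
    (hd : d + A.card + 𝔅.card + 1 = Fintype.card V + k)
    (hk : k = 0 ∨ k = 𝔅.card + 1) : Q K d (mg A (un 𝔅) T k) := by
  rcases hk with rfl | hk
  · exact Q_top (mem_mg.2 (Or.inr ⟨∅, ⟨by simp, by simp, by simp⟩, by simp [un]⟩))
  · refine Q_congr (𝒢 := sing A) ?_ ?_ (Q_base d A (by omega))
    · exact fun G hG => ⟨G, Or.inl hG, le_rfl⟩
    · rintro G (hG | ⟨M, hM, rfl⟩)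
      · exact ⟨G, hG, le_rfl⟩
      · have := card_bound 𝔅 T hne hch hT k M hM
        omega

lemma main (S : Finset (Finset V)) (hS : HasLeafProp S) (Fs : Finset (Finset V))
    (hne : ∀ B ∈ Fs, B.Nonempty) (hdis : ∀ F ∈ Fs, ∀ F' ∈ Fs, F ≠ F' → F ∩ F' = ∅)
    (hch : ∀ B ∈ Fs, ∀ H ∈ S, ∀ H' ∈ S,
      (∀ w ∈ B, w ∈ H → w ∈ H') ∨ (∀ w ∈ B, w ∈ H' → w ∈ H)) (d r : ℕ) :
    ∀ 𝔅 ⊆ Fs, 𝔅.card = r → ∀ T ⊆ S, 𝔅 ⊆ T → (∀ H ∈ T, ∃ w ∈ un 𝔅, w ∈ H) →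
    ∀ A : Finset V, (∀ w ∈ un 𝔅, w ∉ A) → ∀ k, k ≤ r + 1 →
    d + A.card + r + 1 = Fintype.card V + k → Q K d (mg A (un 𝔅) T k) := by
  induction r with
  | zero =>
    intro 𝔅 h𝔅 hr T hT h𝔅T hTU A hA k hk hd
    exact main_ends 𝔅 T (fun B hB => hne B (h𝔅 hB))
      (fun B hB H hH H' hH' => hch B (h𝔅 hB) H (hT hH) H' (hT hH')) hTU A d k (by omega) (by omega)
  | succ r ih =>
    intro 𝔅 h𝔅 hr T hT h𝔅T hTU A hA k hk hd
    have hne1 : ∀ B ∈ 𝔅, B.Nonempty := fun B hB => hne B (h𝔅 hB)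
    have hch1 : ∀ B ∈ 𝔅, ∀ H ∈ T, ∀ H' ∈ T,
      (∀ w ∈ B, w ∈ H → w ∈ H') ∨ (∀ w ∈ B, w ∈ H' → w ∈ H) :=
      fun B hB H hH H' hH' => hch B (h𝔅 hB) H (hT hH) H' (hT hH')
    by_cases hends : k = 0 ∨ k = r + 1 + 1
    · exact main_ends 𝔅 T hne1 hch1 hTU A d k (by omega) (by omega)
    have h𝔅ne : 𝔅.Nonempty := Finset.card_pos.1 (by omega)
    have : Nonempty V := by
      obtain ⟨B, hB⟩ := h𝔅ne
      obtain ⟨v, _⟩ := hne1 B hB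
      exact ⟨v⟩
    have hcom : ∀ B ∈ 𝔅, ∃ v ∈ B, ∀ H ∈ T, (∃ w ∈ B, w ∈ H) → v ∈ H :=
      fun B hB => exists_common B T (hne1 B hB) (hch1 B hB)
    choose! c hc1 hc2 using hcom
    obtain ⟨v, hv, hnest⟩ := exists_nest S hS (𝔅.image c) T hT (h𝔅ne.image c)
    obtain ⟨B, hB, rfl⟩ := Finset.mem_image.1 hv
    obtain ⟨E, hE, hmin⟩ := Finset.exists_min_image
      (T.filter fun E => ∀ w ∈ E, w ∈ un 𝔅 → w ∈ B) (fun E => (E ∩ un 𝔅).card)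
      ⟨B, Finset.mem_filter.2 ⟨h𝔅T hB, fun w hw _ => hw⟩⟩
    obtain ⟨hET, hEB⟩ := Finset.mem_filter.1 hE
    set X := E ∩ un 𝔅 with hX
    have hXB : X ⊆ B := fun w hw =>
      hEB w (Finset.mem_inter.1 hw).1 (Finset.mem_inter.1 hw).2
    have hXE : X ⊆ E := Finset.inter_subset_left
    have hXne : X.Nonempty := by
      obtain ⟨w, hw, hw'⟩ := hTU E hET
      exact ⟨w, Finset.mem_inter.2 ⟨hw', hw⟩⟩
    have h𝔅' : 𝔅.erase B ⊆ 𝔅 := Finset.erase_subset _ _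
    have hBU' : ∀ w ∈ B, w ∉ un (𝔅.erase B) := by
      intro w hw hw'
      obtain ⟨B', hB', hwB'⟩ := mem_un.1 hw'
      have := hdis B (h𝔅 hB) B' (h𝔅 (h𝔅' hB')) (Finset.ne_of_mem_erase hB').symm
      have h2 : w ∈ B ∩ B' := Finset.mem_inter.2 ⟨hw, hwB'⟩
      rw [this] at h2
      exact absurd h2 (Finset.notMem_empty _)
    have hU : ∀ w, w ∈ un 𝔅 ↔ w ∈ un (𝔅.erase B) ∨ w ∈ B := by
      intro w
      constructor
      · intro hw
        obtain ⟨B', hB', hwB'⟩ := mem_un.1 hw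
        by_cases h : B' = B
        · exact Or.inr (h ▸ hwB')
        · exact Or.inl (mem_un.2 ⟨B', Finset.mem_erase.2 ⟨h, hB'⟩, hwB'⟩)
      · rintro (hw | hw)
        · obtain ⟨B', hB', hwB'⟩ := mem_un.1 hw
          exact mem_un.2 ⟨B', h𝔅' hB', hwB'⟩
        · exact mem_un.2 ⟨B, hB, hw⟩
    have hUeq : un 𝔅 = un (𝔅.erase B) ∪ B := by
      ext w
      rw [hU, Finset.mem_union]
    have hTXX : ∀ H ∈ T, ¬ X ⊆ H → ∀ w ∈ B, w ∈ H → w ∈ X := by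
      intro H hH hXH w hw hwH
      rcases hch1 B hB E hET H hH with h | h
      · exact absurd (fun u hu => h u (hXB hu) (hXE hu)) hXH
      · exact Finset.mem_inter.2 ⟨h w hw hwH, (hU w).2 (Or.inr hw)⟩
    have hTXU : ∀ H ∈ T, ¬ X ⊆ H → ∃ w ∈ un (𝔅.erase B), w ∈ H := by
      intro H hH hXH
      by_contra hcon
      push Not at hcon
      have hHB : ∀ w ∈ H, w ∈ un 𝔅 → w ∈ B := fun w hw hwU =>
        ((hU w).1 hwU).resolve_left (fun h => hcon w h hw)
      have h1 := hmin H (Finset.mem_filter.2 ⟨hH, hHB⟩)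
      have h2 : H ∩ un 𝔅 ⊂ X := by
        refine ⟨fun w hw => ?_, fun h => hXH (h.trans Finset.inter_subset_left)⟩
        obtain ⟨hw1, hw2⟩ := Finset.mem_inter.1 hw
        exact hTXX H hH hXH w (hHB w hw1 hw2) hw1
      have := Finset.card_lt_card h2
      omega
    have hSp : ∀ H ∈ T, ∀ H' ∈ T, ¬ X ⊆ H → ¬ X ⊆ H' → (∃ w ∈ B, w ∈ H ∧ w ∈ H') →
        ∃ w ∈ un (𝔅.erase B), w ∈ H ∧ w ∈ H' := by
      rintro H hH H' hH' hXH hXH' ⟨w, hw, hwH, hwH'⟩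
      have key : ∀ H ∈ T, ¬ X ⊆ H → ∃ B' ∈ 𝔅.erase B, c B' ∈ H := by
        intro H hH hXH
        obtain ⟨u, hu, huH⟩ := hTXU H hH hXH
        obtain ⟨B', hB', huB'⟩ := mem_un.1 hu
        exact ⟨B', hB', hc2 B' (h𝔅' hB') H hH ⟨u, huB', huH⟩⟩
      rcases hnest H hH H' hH' (hc2 B hB H hH ⟨w, hw, hwH⟩) (hc2 B hB H' hH' ⟨w, hw, hwH'⟩)
        with h | h
      · obtain ⟨B', hB', hcB'⟩ := key H hH hXH
        exact ⟨c B', mem_un.2 ⟨B', hB', hc1 B' (h𝔅' hB')⟩, hcB',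
          h _ (Finset.mem_image_of_mem c (h𝔅' hB')) hcB'⟩
      · obtain ⟨B', hB', hcB'⟩ := key H' hH' hXH'
        exact ⟨c B', mem_un.2 ⟨B', hB', hc1 B' (h𝔅' hB')⟩,
          h _ (Finset.mem_image_of_mem c (h𝔅' hB')) hcB', hcB'⟩
    have hcard' : (𝔅.erase B).card = r := by
      rw [Finset.card_erase_of_mem hB]; omega
    have hAX : ∀ a ∈ A, ({a} : Finset V) \ X = {a} := by
      intro a ha
      rw [Finset.sdiff_eq_self_iff_disjoint, Finset.disjoint_singleton_left]
      exact fun h => hA a ((hU a).2 (Or.inr (hXB h))) ha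
    have hBB' : ∀ B' ∈ 𝔅.erase B, ∀ w ∈ B, w ∉ B' := fun B' hB' w hw hwB' =>
      hBU' w hw (mem_un.2 ⟨B', hB', hwB'⟩)
    refine Q_split X ?_ ?_
    · -- the colon ideal
      have hq := ih (𝔅.erase B) (h𝔅'.trans h𝔅) hcard' (T.filter fun H => ∀ w ∈ B, w ∉ H)
        ((Finset.filter_subset _ _).trans hT)
        (fun B' hB' => Finset.mem_filter.2 ⟨h𝔅T (h𝔅' hB'), hBB' B' hB'⟩)
        (fun H hH => by
          obtain ⟨hHT, hHB⟩ := Finset.mem_filter.1 hH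
          obtain ⟨w, hw, hwH⟩ := hTU H hHT
          exact ⟨w, ((hU w).1 hw).resolve_right (fun h => hHB w h hwH), hwH⟩)
        A (fun w hw => hA w ((hU w).2 (Or.inl hw))) (k - 1) (by omega) (by omega)
      refine Q_congr ?_ ?_ hq
      · intro G hG
        rcases mem_mg.1 hG with ⟨a, ha, rfl⟩ | ⟨M, hM, rfl⟩
        · exact ⟨{a}, ⟨{a}, mem_mg.2 (Or.inl ⟨a, ha, rfl⟩), hAX a ha⟩, le_rfl⟩
        · have hMT : ∀ H ∈ M, H ∈ T ∧ ∀ w ∈ B, w ∉ H := fun H hH => Finset.mem_filter.1 (hM.1 hH)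
          have hEM : E ∉ M := by
            intro h
            obtain ⟨w, hw⟩ := hXne
            exact (hMT E h).2 w (hXB hw) (hXE hw)
          refine ⟨(un (insert E M) ∩ un 𝔅) \ X, ⟨_, mem_mg.2 (Or.inr ⟨insert E M,
            ⟨?_, ?_, ?_⟩, rfl⟩), rfl⟩, ?_⟩
          · exact Finset.insert_subset hET (fun H hH => (hMT H hH).1)
          · rw [Finset.card_insert_of_notMem hEM, hM.2.1]; omega
          · intro H hH H' hH' hHH' w hw hwH hwH'
            rcases Finset.mem_insert.1 hH with rfl | hH2
            · rcases Finset.mem_insert.1 hH' with rfl | hH3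
              · exact hHH' rfl
              · exact (hMT H' hH3).2 w (hEB w hwH hw) hwH'
            · rcases Finset.mem_insert.1 hH' with rfl | hH3
              · exact (hMT H hH2).2 w (hEB w hwH' hw) hwH
              · exact hM.2.2 H hH2 H' hH3 hHH' w
                  (((hU w).1 hw).resolve_right (fun h => (hMT H hH2).2 w h hwH)) hwH hwH'
          · intro w hw
            obtain ⟨hw1, hwX⟩ := Finset.mem_sdiff.1 hw
            obtain ⟨hwM, hwU⟩ := Finset.mem_inter.1 hw1
            obtain ⟨H, hH, hwH⟩ := mem_un.1 hwM
            rcases Finset.mem_insert.1 hH with rfl | hH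
            · exact absurd (Finset.mem_inter.2 ⟨hwH, hwU⟩) hwX
            · exact Finset.mem_inter.2 ⟨mem_un.2 ⟨H, hH, hwH⟩,
                ((hU w).1 hwU).resolve_right (fun h => (hMT H hH).2 w h hwH)⟩
      · rintro _ ⟨G, hG, rfl⟩
        rcases mem_mg.1 hG with ⟨a, ha, rfl⟩ | ⟨M, hM, rfl⟩
        · exact ⟨{a}, mem_mg.2 (Or.inl ⟨a, ha, rfl⟩), (hAX a ha).ge⟩
        · have hex : ∃ H0 ∈ M, ∀ H ∈ M, H ≠ H0 → ∀ w ∈ B, w ∉ H := by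
            by_cases h : ∃ H0 ∈ M, ∃ w ∈ B, w ∈ H0
            · obtain ⟨H0, hH0, hw0⟩ := h
              refine ⟨H0, hH0, fun H hH hne' w hw hwH => ?_⟩
              exact hM.2.2 H hH H0 hH0 hne' (c B) ((hU _).2 (Or.inr (hc1 B hB)))
                (hc2 B hB H (hM.1 hH) ⟨w, hw, hwH⟩) (hc2 B hB H0 (hM.1 hH0) hw0)
            · have : M.Nonempty := Finset.card_pos.1 (by rw [hM.2.1]; omega)
              obtain ⟨H0, hH0⟩ := this
              exact ⟨H0, hH0, fun H hH _ w hw hwH => h ⟨H, hH, w, hw, hwH⟩⟩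
          obtain ⟨H0, hH0, hH0'⟩ := hex
          refine ⟨_, mem_mg.2 (Or.inr ⟨M.erase H0, ⟨?_, ?_, ?_⟩, rfl⟩), ?_⟩
          · intro H hH
            obtain ⟨h1, h2⟩ := Finset.mem_erase.1 hH
            exact Finset.mem_filter.2 ⟨hM.1 h2, hH0' H h2 h1⟩
          · rw [Finset.card_erase_of_mem hH0, hM.2.1]
          · exact fun H hH H' hH' h w hw => hM.2.2 H (Finset.mem_of_mem_erase hH) H'
              (Finset.mem_of_mem_erase hH') h w ((hU w).2 (Or.inl hw))
          · intro w hw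
            obtain ⟨hw1, hw2⟩ := Finset.mem_inter.1 hw
            obtain ⟨H, hH, hwH⟩ := mem_un.1 hw1
            exact Finset.mem_sdiff.2 ⟨Finset.mem_inter.2
              ⟨mem_un.2 ⟨H, Finset.mem_of_mem_erase hH, hwH⟩, (hU w).2 (Or.inl hw2)⟩,
              fun h => hBU' w (hXB h) hw2⟩
    · -- the sum
      have hTX : ∀ {H}, H ∈ T.filter (fun H => ¬ X ⊆ H) ↔ H ∈ T ∧ ¬ X ⊆ H :=
        fun {H} => Finset.mem_filter
      have hq : Q K d (fl A (un (𝔅.erase B)) B X (T.filter fun H => ¬ X ⊆ H) k) := by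
        refine flagged d A (un (𝔅.erase B)) (T.filter fun H => ¬ X ⊆ H) k _ X B rfl hXB
          (fun H hH H' hH' => hch1 B hB H (hTX.1 hH).1 H' (hTX.1 hH').1)
          (fun H hH => hTXX H (hTX.1 hH).1 (hTX.1 hH).2)
          (fun w hw => hA w ((hU w).2 (Or.inr hw))) hBU' ?_
        intro v hv T0 hT0 hT0'
        have hvA : v ∉ A := hA v ((hU v).2 (Or.inr hv))
        refine ih (𝔅.erase B) (h𝔅'.trans h𝔅) hcard' T0
          (fun H hH => hT (hTX.1 (hT0 hH)).1) ?_
          (fun H hH => hTXU H (hTX.1 (hT0 hH)).1 (hTX.1 (hT0 hH)).2) (insert v A) ?_ k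
          (by omega) (by rw [Finset.card_insert_of_notMem hvA]; omega)
        · intro B' hB'
          refine hT0' B' (hTX.2 ⟨h𝔅T (h𝔅' hB'), fun h => ?_⟩) (hBB' B' hB')
          obtain ⟨w, hw⟩ := hXne
          exact hBB' B' hB' w (hXB hw) (h hw)
        · intro w hw hwA
          rcases Finset.mem_insert.1 hwA with rfl | hwA
          · exact hBU' w hv hw
          · exact hA w ((hU w).2 (Or.inl hw)) hwA
      refine Q_congr ?_ ?_ hq
      · intro G hG
        rcases mem_fl.1 hG with rfl | ⟨a, ha, rfl⟩ | ⟨M, hM, rfl⟩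
        · exact ⟨_, Or.inl rfl, le_rfl⟩
        · exact ⟨{a}, Or.inr (mem_mg.2 (Or.inl ⟨a, ha, rfl⟩)), le_rfl⟩
        · refine ⟨_, Or.inr (mem_mg.2 (Or.inr ⟨M, ⟨fun H hH => (hTX.1 (hM.1 hH)).1, hM.2.1, ?_⟩,
            rfl⟩)), by rw [hUeq]⟩
          intro H hH H' hH' hHH' w hw hwH hwH'
          rcases (hU w).1 hw with hw | hw
          · exact hM.2.2 H hH H' hH' hHH' w hw hwH hwH'
          · obtain ⟨u, hu, huH, huH'⟩ := hSp H (hTX.1 (hM.1 hH)).1 H' (hTX.1 (hM.1 hH')).1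
              (hTX.1 (hM.1 hH)).2 (hTX.1 (hM.1 hH')).2 ⟨w, hw, hwH, hwH'⟩
            exact hM.2.2 H hH H' hH' hHH' u hu huH huH'
      · intro G hG
        rcases hG with rfl | hG
        · exact ⟨X, mem_fl.2 (Or.inl rfl), le_rfl⟩
        rcases mem_mg.1 hG with ⟨a, ha, rfl⟩ | ⟨M, hM, rfl⟩
        · exact ⟨{a}, mem_fl.2 (Or.inr (Or.inl ⟨a, ha, rfl⟩)), le_rfl⟩
        · by_cases h : ∃ H ∈ M, X ⊆ H
          · obtain ⟨H, hH, hXH⟩ := h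
            exact ⟨X, mem_fl.2 (Or.inl rfl), fun w hw => Finset.mem_inter.2
              ⟨mem_un.2 ⟨H, hH, hXH hw⟩, (hU w).2 (Or.inr (hXB hw))⟩⟩
          · refine ⟨_, mem_fl.2 (Or.inr (Or.inr ⟨M, ⟨fun H hH => hTX.2 ⟨hM.1 hH,
              fun hX => h ⟨H, hH, hX⟩⟩, hM.2.1, ?_⟩, rfl⟩)), by rw [hUeq]⟩
            exact fun H hH H' hH' h w hw => hM.2.2 H hH H' hH' h w ((hU w).2 (Or.inl hw))

end CMF

open MvPolynomial
namespace CMF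
set_option linter.unusedSectionVars false
variable {V : Type} [Fintype V] [DecidableEq V] {K : Type} [Field K]

lemma facetIdeal_eq (S : Finset (Finset V)) : facetIdealOf K S = sq K (S : Set (Finset V)) := by
  unfold facetIdealOf sq
  congr 1
  ext p
  simp [eq_comm]

lemma sqfree_mem (S : Finset (Finset V)) (hne : ∀ F ∈ S, F.Nonempty) (k : ℕ) :
    ∀ f ∈ facetIdealOf K S ^ k, ∀ m ∈ f.support, (∀ v, m v ≤ 1) →
    ∃ M ∈ mset Finset.univ S k, un M ⊆ m.support := by
  induction k with
  | zero =>
    intro f _ m _ _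
    exact ⟨∅, ⟨by simp, by simp, by simp⟩, by simp [un]⟩
  | succ k ih =>
    intro f hf
    rw [pow_succ] at hf
    refine Submodule.mul_induction_on hf ?_ ?_
    · intro a ha b hb m hm hm1
      have := support_mul a b hm
      obtain ⟨ma, hma, mb, hmb, rfl⟩ := Finset.mem_add.1 this
      have h1 : ∀ v, ma v + mb v ≤ 1 := hm1
      obtain ⟨M, hM, hMa⟩ := ih a ha ma hma (fun v => by have := h1 v; omega)
      rw [facetIdeal_eq, mem_sq] at hb
      obtain ⟨G, hG, hGb⟩ := hb mb hmb
      have hdisj : ∀ w ∈ G, w ∉ un M := by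
        intro w hw hw'
        have e1 := Finsupp.mem_support_iff.1 (hGb hw)
        have e2 := Finsupp.mem_support_iff.1 (hMa hw')
        have := h1 w
        omega
      have hGM : G ∉ M := by
        intro h
        obtain ⟨w, hw⟩ := hne G hG
        exact hdisj w hw (mem_un.2 ⟨G, h, hw⟩)
      refine ⟨insert G M, ⟨Finset.insert_subset hG hM.1, ?_, ?_⟩, ?_⟩
      · rw [Finset.card_insert_of_notMem hGM, hM.2.1]
      · intro H hH H' hH' hne' w hw hwH hwH'
        rcases Finset.mem_insert.1 hH with e | h2
        · rcases Finset.mem_insert.1 hH' with e' | h3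
          · exact hne' (e.trans e'.symm)
          · exact hdisj w (e ▸ hwH) (mem_un.2 ⟨H', h3, hwH'⟩)
        · rcases Finset.mem_insert.1 hH' with e' | h3
          · exact hdisj w (e' ▸ hwH') (mem_un.2 ⟨H, h2, hwH⟩)
          · exact hM.2.2 H h2 H' h3 hne' w hw hwH hwH'
      · intro w hw
        obtain ⟨H, hH, hwH⟩ := mem_un.1 hw
        rw [Finsupp.mem_support_iff, Finsupp.add_apply]
        rcases Finset.mem_insert.1 hH with rfl | h2
        · have := Finsupp.mem_support_iff.1 (hGb hwH)
          omega
        · have := Finsupp.mem_support_iff.1 (hMa (mem_un.2 ⟨H, h2, hwH⟩))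
          omega
    · intro a b ha hb m hm
      rcases Finset.mem_union.1 (support_add hm) with h | h
      · exact ha m h
      · exact hb m h

lemma sqfreePow_eq (S : Finset (Finset V)) (hne : ∀ F ∈ S, F.Nonempty) (k : ℕ) :
    sqfreePow K (facetIdealOf K S) k = sq K (un '' mset Finset.univ S k) := by
  apply le_antisymm
  · refine Ideal.span_le.2 ?_
    rintro _ ⟨⟨T, rfl⟩, hT⟩
    obtain ⟨M, hM, hMT⟩ := sqfree_mem S hne k _ hT (ex T) (by
      rw [xMon_eq, mem_support_iff, coeff_monomial]; simp)
      (fun v => by rw [ex_apply]; split_ifs <;> omega)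
    refine (xMon_mem_sq K).2 ⟨_, ⟨M, hM, rfl⟩, hMT.trans ?_⟩
    intro v hv
    by_contra h
    rw [Finsupp.mem_support_iff, ex_apply, if_neg h] at hv
    exact hv rfl
  · refine Ideal.span_le.2 ?_
    rintro _ ⟨_, ⟨M, hM, rfl⟩, rfl⟩
    refine Ideal.subset_span ⟨⟨_, rfl⟩, ?_⟩
    have : xMon K (un M) = ∏ H ∈ M, xMon K H := by
      unfold xMon un
      rw [Finset.prod_biUnion]
      · rfl
      · intro H hH H' hH' h
        rw [Function.onFun, Finset.disjoint_left]
        exact fun w hw => hM.2.2 H hH H' hH' h w (Finset.mem_univ _) hw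
    rw [this, ← hM.2.1, ← Finset.prod_const]
    exact Ideal.prod_mem_prod fun H hH => Ideal.subset_span ⟨H, hM.1 hH, rfl⟩

lemma final_Q (S : Finset (Finset V)) (hS : HasLeafProp S)
    (hanti : ∀ F ∈ S, ∀ G ∈ S, F ⊆ G → F = G) (Fs : Finset (Finset V)) (hFsS : Fs ⊆ S)
    (hne : ∀ B ∈ Fs, B.Nonempty) (hdis : ∀ F ∈ Fs, ∀ F' ∈ Fs, F ≠ F' → F ∩ F' = ∅)
    (hcov : ∀ v, ∃ B ∈ Fs, v ∈ B)
    (hch : ∀ B ∈ Fs, ∀ H ∈ S, ∀ H' ∈ S,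
      (∀ w ∈ B, w ∈ H → w ∈ H') ∨ (∀ w ∈ B, w ∈ H' → w ∈ H))
    (F : Finset V) (hF : F ∈ Fs)
    (hsp : ∀ H ∈ S, ∀ H' ∈ S, H ≠ F → H' ≠ F →
      ((H ∩ H').Nonempty ↔ ((H ∩ H') \ F).Nonempty))
    (d k : ℕ) (hk : k ≤ Fs.card) (hd : d + Fs.card + 1 = Fintype.card V + k) :
    Q K d (insert F (un '' mset Finset.univ S k)) := by
  have hU : ∀ w, w ∉ F → w ∈ un (Fs.erase F) := by
    intro w hw
    obtain ⟨B, hB, hwB⟩ := hcov w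
    exact mem_un.2 ⟨B, Finset.mem_erase.2 ⟨fun h => hw (h ▸ hwB), hB⟩, hwB⟩
  have hFB : ∀ B ∈ Fs.erase F, ∀ w ∈ F, w ∉ B := by
    intro B hB w hw hwB
    have h1 := hdis F hF B (Finset.mem_of_mem_erase hB) (Finset.ne_of_mem_erase hB).symm
    have h2 : w ∈ F ∩ B := Finset.mem_inter.2 ⟨hw, hwB⟩
    rw [h1] at h2
    exact absurd h2 (Finset.notMem_empty _)
  have hFU : ∀ w ∈ F, w ∉ un (Fs.erase F) := by
    intro w hw hw'
    obtain ⟨B, hB, hwB⟩ := mem_un.1 hw'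
    exact hFB B hB w hw hwB
  have hpos : 0 < Fs.card := Finset.card_pos.2 ⟨F, hF⟩
  have hq : Q K d (fl ∅ (un (Fs.erase F)) F F (S.erase F) k) := by
    refine flagged d ∅ (un (Fs.erase F)) (S.erase F) k _ F F rfl le_rfl
      (fun H hH H' hH' => hch F hF H (Finset.mem_of_mem_erase hH) H' (Finset.mem_of_mem_erase hH'))
      (fun H _ w hw _ => hw) (by simp) hFU ?_
    intro v hv T0 hT0 hT0'
    refine main S hS Fs hne hdis hch d (Fs.card - 1) (Fs.erase F) (Finset.erase_subset _ _)
      (Finset.card_erase_of_mem hF) T0 (hT0.trans (Finset.erase_subset _ _)) ?_ ?_ (insert v ∅) ?_ k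
      (by omega) (by rw [Finset.card_insert_of_notMem (Finset.notMem_empty v), Finset.card_empty]; omega)
    · intro B hB
      exact hT0' B (Finset.mem_erase.2 ⟨Finset.ne_of_mem_erase hB,
        hFsS (Finset.mem_of_mem_erase hB)⟩) (hFB B hB)
    · intro H hH
      obtain ⟨h1, h2⟩ := Finset.mem_erase.1 (hT0 hH)
      by_contra hcon
      push Not at hcon
      refine h1 (hanti H h2 F (hFsS hF) fun w hw => ?_)
      by_contra hwF
      exact hcon w (hU w hwF) hw
    · intro w hw hw'
      rcases Finset.mem_insert.1 hw' with rfl | h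
      · exact hFU w hv hw
      · exact absurd h (Finset.notMem_empty _)
  refine Q_congr ?_ ?_ hq
  · intro G hG
    rcases mem_fl.1 hG with rfl | ⟨a, ha, rfl⟩ | ⟨M, hM, rfl⟩
    · exact ⟨G, Or.inl rfl, le_rfl⟩
    · exact absurd ha (Finset.notMem_empty _)
    · refine ⟨un M, Or.inr ⟨M, ⟨hM.1.trans (Finset.erase_subset _ _), hM.2.1, ?_⟩, rfl⟩, ?_⟩
      · intro H hH H' hH' hne' w _ hwH hwH'
        obtain ⟨h1, h2⟩ := Finset.mem_erase.1 (hM.1 hH)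
        obtain ⟨h3, h4⟩ := Finset.mem_erase.1 (hM.1 hH')
        obtain ⟨u, hu⟩ := (hsp H h2 H' h4 h1 h3).1 ⟨w, Finset.mem_inter.2 ⟨hwH, hwH'⟩⟩
        obtain ⟨hu1, hu2⟩ := Finset.mem_sdiff.1 hu
        obtain ⟨hu3, hu4⟩ := Finset.mem_inter.1 hu1
        exact hM.2.2 H hH H' hH' hne' u (hU u hu2) hu3 hu4
      · intro w hw
        refine Finset.mem_inter.2 ⟨hw, Finset.mem_union.2 ?_⟩
        by_cases h : w ∈ F
        · exact Or.inr h
        · exact Or.inl (hU w h)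
  · intro G hG
    rcases hG with rfl | ⟨M, hM, rfl⟩
    · exact ⟨G, mem_fl.2 (Or.inl rfl), le_rfl⟩
    · by_cases h : F ∈ M
      · exact ⟨F, mem_fl.2 (Or.inl rfl), fun w hw => mem_un.2 ⟨F, h, hw⟩⟩
      · refine ⟨_, mem_fl.2 (Or.inr (Or.inr ⟨M, ⟨fun H hH => Finset.mem_erase.2
          ⟨fun e => h (e ▸ hH), hM.1 hH⟩, hM.2.1, ?_⟩, rfl⟩)), Finset.inter_subset_left⟩
        exact fun H hH H' hH' h w _ => hM.2.2 H hH H' hH' h w (Finset.mem_univ _)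

lemma matchingNumber_eq (S Fs : Finset (Finset V)) (hFsS : Fs ⊆ S)
    (hneS : ∀ B ∈ S, B.Nonempty) (hdis : ∀ F ∈ Fs, ∀ F' ∈ Fs, F ≠ F' → F ∩ F' = ∅)
    (hcov : ∀ v, ∃ B ∈ Fs, v ∈ B)
    (hch : ∀ B ∈ Fs, ∀ H ∈ S, ∀ H' ∈ S,
      (∀ w ∈ B, w ∈ H → w ∈ H') ∨ (∀ w ∈ B, w ∈ H' → w ∈ H)) :
    matchingNumberOf S = Fs.card := by
  refine IsGreatest.csSup_eq ⟨⟨Fs, ⟨hFsS, hdis⟩, rfl⟩, ?_⟩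
  rintro _ ⟨M, hM, rfl⟩
  refine card_bound Fs S (fun B hB => hneS B (hFsS hB)) hch ?_ _ M ⟨hM.1, rfl, ?_⟩
  · intro H hH
    obtain ⟨w, hw⟩ := hneS H hH
    obtain ⟨B, hB, hwB⟩ := hcov w
    exact ⟨w, mem_un.2 ⟨B, hB, hwB⟩, hw⟩
  · intro H hH H' hH' hne w _ hw hw'
    have h2 : w ∈ H ∩ H' := Finset.mem_inter.2 ⟨hw, hw'⟩
    rw [hM.2 H hH H' hH' hne] at h2
    exact absurd h2 (Finset.notMem_empty _)

end CMF

open MvPolynomial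
namespace CMF
set_option linter.unusedSectionVars false
variable {V : Type} [Fintype V] [DecidableEq V] {K : Type} [Field K]
open RingTheory.Sequence

lemma xMon_mem_max (S : Finset V) (hS : S.Nonempty) :
    xMon K S ∈ Ideal.span (Set.range (X : V → MvPolynomial V K)) := by
  obtain ⟨v, hv⟩ := hS
  exact Ideal.mem_of_dvd _ (Finset.dvd_prod_of_mem _ hv) (Ideal.subset_span ⟨v, rfl⟩)

lemma th_mem (d : ℕ) : ∀ r ∈ (th K d : List (MvPolynomial V K)),
    r ∈ Ideal.span (Set.range (X : V → MvPolynomial V K)) := by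
  induction d with
  | zero => intro r hr; simp [th] at hr
  | succ d ih =>
    intro r hr
    rw [th, List.mem_cons] at hr
    rcases hr with rfl | hr
    · rw [esymm]
      refine Ideal.sum_mem _ fun S hS => xMon_mem_max S ?_
      rw [Finset.mem_powersetCard] at hS
      exact Finset.card_pos.1 (by omega)
    · exact ih r hr

lemma th_length (d : ℕ) : (th K d : List (MvPolynomial V K)).length = d := by
  induction d with
  | zero => rfl
  | succ d ih => rw [th, List.length_cons, ih]

lemma one_notMem_max : (1 : MvPolynomial V K) ∉ Ideal.span (Set.range (X : V → MvPolynomial V K)) := by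
  intro h
  have hle : Ideal.span (Set.range (X : V → MvPolynomial V K)) ≤
      RingHom.ker (constantCoeff : MvPolynomial V K →+* K) := by
    refine Ideal.span_le.2 ?_
    rintro _ ⟨v, rfl⟩
    simp [RingHom.mem_ker]
  have := hle h
  rw [RingHom.mem_ker, map_one] at this
  exact one_ne_zero this

lemma regular_of_weakly (I : Ideal (MvPolynomial V K)) (rs : List (MvPolynomial V K))
    (hI : I ≤ Ideal.span (Set.range (X : V → MvPolynomial V K)))
    (hrs : ∀ r ∈ rs, r ∈ Ideal.span (Set.range (X : V → MvPolynomial V K)))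
    (h : IsWeaklyRegular (MvPolynomial V K ⧸ I) rs) : IsRegular (MvPolynomial V K ⧸ I) rs := by
  refine ⟨h, fun htop => ?_⟩
  have hle : Ideal.ofList rs • (⊤ : Submodule (MvPolynomial V K) (MvPolynomial V K ⧸ I)) ≤
      Submodule.map (Submodule.mkQ I) (Ideal.span (Set.range (X : V → MvPolynomial V K))) := by
    rw [Submodule.smul_le]
    intro r hr n _
    obtain ⟨y, rfl⟩ := Submodule.mkQ_surjective I n
    refine ⟨r * y, ?_, ?_⟩
    · refine Ideal.mul_mem_right _ _ ?_
      exact (Ideal.span_le.2 fun x hx => hrs x hx : Ideal.ofList rs ≤ _) hr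
    · rw [← smul_eq_mul, map_smul]
  rw [← htop] at hle
  obtain ⟨y, hy, hy1⟩ := hle (Submodule.mem_top (x := Submodule.mkQ I 1))
  have h2 : y - 1 ∈ I := (Submodule.Quotient.eq I).1 hy1
  have h3 := Ideal.sub_mem _ hy (hI h2)
  rw [sub_sub_cancel] at h3
  exact one_notMem_max h3

lemma depth_eq (I : Ideal (MvPolynomial V K)) (d : ℕ)
    (hI : I ≤ Ideal.span (Set.range (X : V → MvPolynomial V K)))
    (hq : IsWeaklyRegular (MvPolynomial V K ⧸ I) (th K d : List (MvPolynomial V K)))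
    (hdim : ringKrullDim (MvPolynomial V K ⧸ I) ≤ (d : WithBot ℕ∞)) :
    gradedDepth K I = d := by
  refine IsGreatest.csSup_eq ⟨⟨th K d, th_length d, th_mem d,
    regular_of_weakly I _ hI (th_mem d) hq⟩, ?_⟩
  rintro _ ⟨rs, rfl, _, hreg⟩
  have h1 := length_le_supportDim rs _ hreg
  rw [Module.supportDim_quotient_eq_ringKrullDim I] at h1
  exact_mod_cast h1.trans hdim

lemma card_le_vertices (Fs : Finset (Finset V)) (hne : ∀ B ∈ Fs, B.Nonempty)
    (hdis : ∀ F ∈ Fs, ∀ F' ∈ Fs, F ≠ F' → F ∩ F' = ∅) (p : V → Prop) :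
    ∃ A : Finset V, (∀ v ∈ A, p v) ∧
      ∃ N ⊆ Fs, (∀ B ∈ N, ∀ v ∈ B, ¬ p v) ∧ Fs.card = A.card + N.card := by
  classical
  let N := Fs.filter fun B => ∀ v ∈ B, ¬ p v
  have h : ∀ B : {B // B ∈ Fs.filter fun B => ¬ ∀ v ∈ B, ¬ p v}, ∃ v ∈ B.1, p v := by
    intro B
    have := (Finset.mem_filter.1 B.2).2
    push Not at this
    exact this
  choose c hc1 hc2 using h
  refine ⟨Finset.univ.image c, ?_, N, Finset.filter_subset _ _,
    fun B hB => (Finset.mem_filter.1 hB).2, ?_⟩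
  · intro v hv
    obtain ⟨B, _, rfl⟩ := Finset.mem_image.1 hv
    exact hc2 B
  · rw [Finset.card_image_of_injective, Finset.card_univ, Fintype.card_coe, add_comm]
    · exact (Finset.card_filter_add_card_filter_not _).symm
    · intro B B' e
      by_contra hBB
      have h1 := hdis B.1 (Finset.mem_filter.1 B.2).1 B'.1 (Finset.mem_filter.1 B'.2).1
        (fun h => hBB (Subtype.ext h))
      have h2 : c B ∈ B.1 ∩ B'.1 := Finset.mem_inter.2 ⟨hc1 B, e ▸ hc1 B'⟩
      rw [h1] at h2
      exact absurd h2 (Finset.notMem_empty _)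

theorem final (Δ : SimplicialComplexOn V)
    (hcov : ∀ v : V, ∃ F ∈ Δ.facets, v ∈ F)
    (hCM : IsCMForestFacets Δ.facets)
    (F : Finset V) (hF : IsSpecialLeafOf Δ.facets F) (k : ℕ) (hk1 : 1 ≤ k)
    (hk : k ≤ matchingNumberOf Δ.facets) :
      gradedDepth K (sqfreePow K (facetIdealOf K Δ.facets) k + Ideal.span {xMon K F}) =
        Fintype.card V - matchingNumberOf Δ.facets + k - 1 := by
  obtain ⟨Fs, hFsS, hleaf, hdis, hcovS, hch⟩ :=
    grafted_structure hCM.2 Δ.nonempty_facet Δ.antichain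
  have hcov' : ∀ v, ∃ B ∈ Fs, v ∈ B := fun v => by
    obtain ⟨H, hH, hv⟩ := hcov v
    exact hcovS H hH v hv
  have hne : ∀ B ∈ Fs, B.Nonempty := fun B hB => Δ.nonempty_facet B (hFsS hB)
  have hν := matchingNumber_eq Δ.facets Fs hFsS Δ.nonempty_facet hdis hcov' hch
  rw [hν] at hk ⊢
  have hrn : Fs.card ≤ Fintype.card V := by
    obtain ⟨A, _, N, hN, hN', e⟩ := card_le_vertices Fs hne hdis (fun _ => True)
    have : N = ∅ := by
      by_contra hcon
      obtain ⟨B, hB⟩ := Finset.nonempty_iff_ne_empty.2 hcon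
      obtain ⟨v, hv⟩ := hne B (hN hB)
      exact hN' B hB v hv trivial
    rw [this, Finset.card_empty, add_zero] at e
    rw [e]
    exact Finset.card_le_univ A
  have hFFs : F ∈ Fs := (hleaf F).1 hF.1
  have heq : sqfreePow K (facetIdealOf K Δ.facets) k + Ideal.span {xMon K F} =
      sq K (insert F (un '' mset Finset.univ Δ.facets k)) := by
    rw [sqfreePow_eq _ Δ.nonempty_facet, sq_insert]
    rfl
  rw [heq]
  refine depth_eq _ _ ?_ (final_Q Δ.facets hCM.1 Δ.antichain Fs hFsS hne hdis hcov' hch F hFFs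
    hF.2 _ k hk (by omega)) ?_
  · refine Ideal.span_le.2 ?_
    rintro _ ⟨G, hG, rfl⟩
    refine xMon_mem_max G ?_
    rcases hG with rfl | ⟨M, hM, rfl⟩
    · exact hne G hFFs
    · obtain ⟨H, hH⟩ := Finset.card_pos.1 (by rw [hM.2.1]; omega : 0 < M.card)
      obtain ⟨v, hv⟩ := Δ.nonempty_facet H (hM.1 hH)
      exact ⟨v, mem_un.2 ⟨H, hH, hv⟩⟩
  · refine dim_le _ _ fun P hP hIP => ?_
    obtain ⟨A, hA, N, hN, hN', e⟩ := card_le_vertices Fs hne hdis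
      (fun v => (X v : MvPolynomial V K) ∈ P)
    refine ⟨A, ?_, hA⟩
    suffices N.card < k by omega
    by_contra hcon
    obtain ⟨M, hMN, hMk⟩ := Finset.exists_subset_card_eq (not_lt.1 hcon)
    have hmem : xMon K (un M) ∈ P := by
      refine hIP ((xMon_mem_sq K).2 ⟨un M, Or.inr ⟨M, ⟨(hMN.trans hN).trans hFsS, hMk, ?_⟩, rfl⟩,
        le_rfl⟩)
      intro H hH H' hH' hne' w _ hw hw'
      have h2 : w ∈ H ∩ H' := Finset.mem_inter.2 ⟨hw, hw'⟩
      rw [hdis H (hN (hMN hH)) H' (hN (hMN hH')) hne'] at h2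
      exact absurd h2 (Finset.notMem_empty _)
    obtain ⟨v, hv, hvP⟩ := hP.prod_mem_iff.1 hmem
    obtain ⟨B, hB, hvB⟩ := mem_un.1 hv
    exact hN' B (hMN hB) v hvB hvP

end CMF

section Statements

variable {V : Type} [Fintype V] [DecidableEq V] (K : Type) [Field K]

theorem stmt2 (Δ : SimplicialComplexOn V)
    (hcov : ∀ v : V, ∃ F ∈ Δ.facets, v ∈ F)
    (hCM : IsCMForestFacets Δ.facets)
    (F : Finset V) (hF : IsSpecialLeafOf Δ.facets F) :
    ∀ k : ℕ, 1 ≤ k → k ≤ matchingNumberOf Δ.facets →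
      gradedDepth K (sqfreePow K (facetIdealOf K Δ.facets) k + Ideal.span {xMon K F}) =
        Fintype.card V - matchingNumberOf Δ.facets + k - 1 := by
  exact fun k hk1 hk => CMF.final Δ hcov hCM F hF k hk1 hk

end Statements
end

section
/- Let Δ be a Cohen-Macaulay simplicial forest on vertex set V(Δ) and let R = K[x_v : v ∈ V(Δ)] be a polynomial ring over a field K. Then for each 1 ≤ k ≤ ν(Δ), dim(R/I(Δ)^{[k]}) = |V(Δ)| − ν(Δ) + k − 1, where dim denotes Krull dimension. -/
open MvPolynomial

variable {V : Type} [Fintype V] [DecidableEq V]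

variable (K : Type) [Field K]

/-- In a grafted complex the traces of the other facets on a leaf form a chain. -/
theorem grafted_chain {S : Finset (Finset V)} (hS : IsGrafted S)
    (hanti : ∀ F ∈ S, ∀ G ∈ S, F ⊆ G → F = G) :
    ∀ F, IsLeafOf S F → ∀ H ∈ S, ∀ H' ∈ S, H ≠ F → H' ≠ F →
      F ∩ H ⊆ F ∩ H' ∨ F ∩ H' ⊆ F ∩ H := by
  induction hS with
  | intro S Fs Gs hunion hdisj hcover hleaves hFdisj hrec ih =>
    intro F hF H hH H' hH' hne hne'
    have hF' := hF
    obtain ⟨hFS, h1 | ⟨G, hG, hGF, hj⟩⟩ := hF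
    · exact absurd (h1 H hH) hne
    have hFFs := (hleaves F).1 hF'
    by_cases hGFs : G ∈ Fs
    · left
      intro v hv
      have h2 := hj H hH hne hv
      rw [hFdisj F hFFs G hGFs (Ne.symm hGF)] at h2
      simp at h2
    have hGGs : G ∈ Gs := by
      rw [hunion] at hG
      exact (Finset.mem_union.1 hG).resolve_left hGFs
    by_cases e1 : H = G
    · right; rw [e1]; exact hj H' hH' hne'
    by_cases e2 : H' = G
    · left; rw [e2]; exact hj H hH hne
    have hanti' : ∀ A ∈ S.erase G, ∀ B ∈ S.erase G, A ⊆ B → A = B :=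
      fun A hA B hB => hanti A (Finset.mem_of_mem_erase hA) B (Finset.mem_of_mem_erase hB)
    have hFe : F ∈ S.erase G := Finset.mem_erase.2 ⟨Ne.symm hGF, hFS⟩
    have hleaf : IsLeafOf (S.erase G) F := by
      have hg := hrec G hGGs
      generalize hT : S.erase G = T at hg hFe
      cases hg with
      | intro _ Fs' Gs' hu hd hc hl hfd hr =>
        rw [hl]
        rw [hu] at hFe
        rcases Finset.mem_union.1 hFe with h | h
        · exact h
        exfalso
        have hns : ¬ F ⊆ G := fun hs => hGF (hanti F hFS G hG hs).symm
        obtain ⟨v, hvF, hvG⟩ := Finset.not_subset.1 hns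
        obtain ⟨F', hF'm, hvF'⟩ := hc F h v hvF
        have hF'S : F' ∈ S := by
          have : F' ∈ S.erase G := by rw [hT, hu]; exact Finset.mem_union_left _ hF'm
          exact Finset.mem_of_mem_erase this
        have hneF : F' ≠ F := by
          rintro rfl
          exact Finset.disjoint_left.1 hd hF'm h
        have := hj F' hF'S hneF (Finset.mem_inter.2 ⟨hvF, hvF'⟩)
        exact hvG (Finset.mem_inter.1 this).2
    exact ih G hGGs hanti' F hleaf H (Finset.mem_erase.2 ⟨e1, hH⟩) H'
      (Finset.mem_erase.2 ⟨e2, hH'⟩) hne hne'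

theorem exists_matching_cover [Nonempty V] {S : Finset (Finset V)} (hS : IsGrafted S)
    (hne : ∀ F ∈ S, F.Nonempty)
    (hanti : ∀ F ∈ S, ∀ G ∈ S, F ⊆ G → F = G) :
    ∃ M : Finset (Finset V), ∃ C : Finset V, IsMatchingOf S M ∧ C.card ≤ M.card ∧
      ∀ F ∈ S, (F ∩ C).Nonempty := by
  have hchain := grafted_chain hS hanti
  cases hS with
  | intro _ Fs Gs hunion hdisj hcover hleaves hFdisj hrec =>
    have hsub : Fs ⊆ S := by rw [hunion]; exact Finset.subset_union_left
    have key : ∀ F ∈ Fs, ∃ c, ∀ H ∈ S, (F ∩ H).Nonempty → c ∈ H := by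
      intro F hF
      have hFS := hsub hF
      obtain ⟨H0, hH0, hmin⟩ := Finset.exists_min_image
        (S.filter fun H => (F ∩ H).Nonempty) (fun H => (F ∩ H).card)
        ⟨F, by simp [hFS, hne F hFS]⟩
      rw [Finset.mem_filter] at hH0
      obtain ⟨c, hc⟩ := hH0.2
      refine ⟨c, fun H hH hHn => ?_⟩
      have hcard := hmin H (Finset.mem_filter.2 ⟨hH, hHn⟩)
      have hsubs : F ∩ H0 ⊆ F ∩ H := by
        by_cases e1 : H = F
        · rw [e1, Finset.inter_self]; exact Finset.inter_subset_left
        have cmp : F ∩ H ⊆ F ∩ H0 ∨ F ∩ H0 ⊆ F ∩ H := by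
          by_cases e2 : H0 = F
          · left; rw [e2, Finset.inter_self]; exact Finset.inter_subset_left
          exact hchain F ((hleaves F).2 hF) H hH H0 hH0.1 e1 e2
        rcases cmp with h | h
        · exact (Finset.eq_of_subset_of_card_le h hcard).symm.subset
        · exact h
      exact (Finset.mem_inter.1 (hsubs hc)).2
    choose! c hc using key
    refine ⟨Fs, Fs.image c, ⟨hsub, hFdisj⟩, Finset.card_image_le, fun H hH => ?_⟩
    obtain ⟨v, hv⟩ := hne H hH
    have : ∃ F ∈ Fs, v ∈ F := by
      have hH2 := hH
      rw [hunion] at hH2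
      rcases Finset.mem_union.1 hH2 with h | h
      · exact ⟨H, h, hv⟩
      · exact hcover H h v hv
    obtain ⟨F, hF, hvF⟩ := this
    exact ⟨c F, Finset.mem_inter.2 ⟨hc F hF H hH ⟨v, Finset.mem_inter.2 ⟨hvF, hv⟩⟩,
      Finset.mem_image_of_mem _ hF⟩⟩

theorem matching_bddAbove (S : Finset (Finset V)) :
    BddAbove {n | ∃ M : Finset (Finset V), IsMatchingOf S M ∧ M.card = n} := by
  refine ⟨S.card, ?_⟩
  rintro n ⟨M, hM, rfl⟩
  exact Finset.card_le_card hM.1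

theorem matching_card_le {S M : Finset (Finset V)} (hM : IsMatchingOf S M) :
    M.card ≤ matchingNumberOf S :=
  le_csSup (matching_bddAbove S) ⟨M, hM, rfl⟩

theorem exists_max_matching (S : Finset (Finset V)) :
    ∃ M : Finset (Finset V), IsMatchingOf S M ∧ M.card = matchingNumberOf S := by
  have := Nat.sSup_mem (s := {n | ∃ M : Finset (Finset V), IsMatchingOf S M ∧ M.card = n})
    ⟨0, ∅, ⟨by simp, by simp⟩, rfl⟩ (matching_bddAbove S)
  exact this

theorem xMon_mem_pow_card {S : Finset (Finset V)} {C : Finset V}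
    (hC : ∀ F ∈ S, (F ∩ C).Nonempty) {k : ℕ} {A : Finset V}
    (hA : xMon K A ∈ facetIdealOf K S ^ k) : k ≤ (A ∩ C).card := by
  let ψ : MvPolynomial V K →+* Polynomial K :=
    (aeval (fun v => if v ∈ C then (Polynomial.X : Polynomial K) else 1)).toRingHom
  have hψ : ∀ B : Finset V, ψ (xMon K B) = Polynomial.X ^ (B ∩ C).card := by
    intro B
    simp only [ψ, xMon, AlgHom.toRingHom_eq_coe, RingHom.coe_coe, map_prod, aeval_X]
    rw [Finset.prod_ite]
    simp [Finset.filter_mem_eq_inter]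
  have h1 : (facetIdealOf K S).map ψ ≤ Ideal.span {Polynomial.X} := by
    rw [facetIdealOf, Ideal.map_span, Ideal.span_le]
    rintro _ ⟨_, ⟨F, hF, rfl⟩, rfl⟩
    rw [hψ, SetLike.mem_coe, Ideal.mem_span_singleton]
    exact dvd_pow_self _ (Finset.card_ne_zero.2 (hC F hF))
  have h2 := Ideal.mem_map_of_mem ψ hA
  rw [Ideal.map_pow, hψ] at h2
  have h3 := Ideal.pow_right_mono h1 k h2
  rw [Ideal.span_singleton_pow, Ideal.mem_span_singleton] at h3
  exact (pow_dvd_pow_iff Polynomial.X_ne_zero Polynomial.not_isUnit_X).1 h3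

theorem dim_mvPoly_compl (D : Finset V) :
    ringKrullDim (MvPolynomial {v // v ∉ D} K) =
      (((Fintype.card V - D.card : ℕ) : ℕ∞) : WithBot ℕ∞) := by
  rw [MvPolynomial.ringKrullDim_of_isNoetherianRing, ringKrullDim_eq_zero_of_field, zero_add,
    Nat.card_eq_fintype_card, Fintype.card_subtype_compl, Fintype.card_coe]
  rfl

/-- lower bound on the dimension -/
theorem dim_ge (D : Finset V) (J : Ideal (MvPolynomial V K)) (T : Set (MvPolynomial V K))
    (hJ : J = Ideal.span T) (hT : ∀ p ∈ T, ∃ A : Finset V, p = xMon K A ∧ (A ∩ D).Nonempty) :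
    (((Fintype.card V - D.card : ℕ) : ℕ∞) : WithBot ℕ∞) ≤ ringKrullDim (MvPolynomial V K ⧸ J) := by
  rw [← dim_mvPoly_compl K D]
  let φ : MvPolynomial V K →+* MvPolynomial {v // v ∉ D} K :=
    (aeval (fun v => if h : v ∈ D then (0 : MvPolynomial {v // v ∉ D} K) else X ⟨v, h⟩)).toRingHom
  have hker : ∀ p ∈ J, φ p = 0 := by
    have : J ≤ RingHom.ker φ := by
      rw [hJ, Ideal.span_le]
      intro p hp
      obtain ⟨A, rfl, v, hv⟩ := hT p hp
      rw [Finset.mem_inter] at hv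
      rw [SetLike.mem_coe, RingHom.mem_ker]
      simp only [φ, xMon, AlgHom.toRingHom_eq_coe, RingHom.coe_coe, map_prod, aeval_X]
      exact Finset.prod_eq_zero hv.1 (by simp [hv.2])
    exact fun p hp => this hp
  have hsurj : Function.Surjective φ := by
    intro q
    refine ⟨rename Subtype.val q, ?_⟩
    simp only [φ, AlgHom.toRingHom_eq_coe, RingHom.coe_coe, aeval_rename]
    have : ((fun v => if h : v ∈ D then (0 : MvPolynomial {v // v ∉ D} K) else X ⟨v, h⟩) ∘
        (Subtype.val : {v // v ∉ D} → V)) = X := by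
      funext v
      simp [v.2]
    rw [this]
    simp
  exact ringKrullDim_le_of_surjective (Ideal.Quotient.lift J φ hker)
    (Ideal.Quotient.lift_surjective_of_surjective J hker hsurj)

theorem dim_span_le (D : Finset V) :
    ringKrullDim (MvPolynomial V K ⧸ Ideal.span ((X : V → MvPolynomial V K) '' (D : Set V))) ≤
      (((Fintype.card V - D.card : ℕ) : ℕ∞) : WithBot ℕ∞) := by
  rw [← dim_mvPoly_compl K D]
  let I := Ideal.span ((X : V → MvPolynomial V K) '' (D : Set V))
  let φ : MvPolynomial {v // v ∉ D} K →ₐ[K] MvPolynomial V K ⧸ I :=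
    (Ideal.Quotient.mkₐ K I).comp (rename Subtype.val)
  have hsurj : Function.Surjective φ := by
    rw [← AlgHom.range_eq_top, eq_top_iff]
    have hm : Function.Surjective (Ideal.Quotient.mkₐ K I) := Ideal.Quotient.mkₐ_surjective K I
    rw [← (AlgHom.range_eq_top _).2 hm, ← Algebra.map_top, ← MvPolynomial.adjoin_range_X,
      AlgHom.map_adjoin, Algebra.adjoin_le_iff]
    rintro _ ⟨_, ⟨v, rfl⟩, rfl⟩
    by_cases h : v ∈ D
    · have : (Ideal.Quotient.mkₐ K I) (X v) = 0 := by
        rw [Ideal.Quotient.mkₐ_eq_mk, Ideal.Quotient.eq_zero_iff_mem]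
        exact Ideal.subset_span ⟨v, h, rfl⟩
      rw [this]
      exact zero_mem _
    · exact ⟨X ⟨v, h⟩, by simp [φ]⟩
  exact ringKrullDim_le_of_surjective φ.toRingHom hsurj

/-- upper bound on the dimension -/
theorem dim_le (n : ℕ) (J : Ideal (MvPolynomial V K))
    (hJ : ∀ P : Ideal (MvPolynomial V K), P.IsPrime → J ≤ P →
      ∃ D : Finset V, n ≤ D.card ∧ ∀ v ∈ D, (X v : MvPolynomial V K) ∈ P) :
    ringKrullDim (MvPolynomial V K ⧸ J) ≤ (((Fintype.card V - n : ℕ) : ℕ∞) : WithBot ℕ∞) := by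
  rw [ringKrullDim_quotient]
  refine iSup_le fun p => ?_
  obtain ⟨D, hD, hX⟩ := hJ p.head.1.asIdeal p.head.1.2 p.head.2
  have hle : ((p.length : ℕ) : WithBot ℕ∞) ≤
      ringKrullDim (MvPolynomial V K ⧸ Ideal.span ((X : V → MvPolynomial V K) '' (D : Set V))) := by
    rw [ringKrullDim_quotient]
    let q : LTSeries (PrimeSpectrum.zeroLocus
        ((Ideal.span ((X : V → MvPolynomial V K) '' (D : Set V)) : Ideal _) :
          Set (MvPolynomial V K))) :=
      { length := p.length
        toFun := fun i => ⟨(p i).1, by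
          rw [PrimeSpectrum.mem_zeroLocus, SetLike.coe_subset_coe, Ideal.span_le]
          rintro _ ⟨v, hv, rfl⟩
          have h : p.head ≤ p i := LTSeries.head_le p i
          exact h (hX v hv)⟩
        step := fun i => p.step i }
    exact Order.LTSeries.length_le_krullDim q
  refine hle.trans ((dim_span_le K D).trans ?_)
  exact_mod_cast Nat.sub_le_sub_left hD _

theorem xMon_biUnion {S M : Finset (Finset V)} (hM : IsMatchingOf S M) :
    xMon K (M.biUnion id) = ∏ F ∈ M, xMon K F := by
  unfold xMon
  rw [Finset.prod_biUnion]
  · rfl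
  intro F hF G hG hne
  exact Finset.disjoint_iff_inter_eq_empty.2 (hM.2 F hF G hG hne)

theorem prime_contains [Nonempty V] {S M : Finset (Finset V)} (hM : IsMatchingOf S M) {k : ℕ} (hk : 1 ≤ k)
    (P : Ideal (MvPolynomial V K)) (hP : P.IsPrime)
    (hle : sqfreePow K (facetIdealOf K S) k ≤ P) :
    ∃ D : Finset V, M.card - k + 1 ≤ D.card + (if k ≤ M.card then 0 else 1) ∧
      ∀ v ∈ D, (X v : MvPolynomial V K) ∈ P := by
  classical
  let N := M.filter fun F => xMon K F ∈ P
  have hN : ∀ F ∈ N, ∃ v ∈ F, (X v : MvPolynomial V K) ∈ P := by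
    intro F hF
    exact (hP.prod_mem_iff (s := F)).1 (Finset.mem_filter.1 hF).2
  choose! d hd hdP using hN
  refine ⟨N.image d, ?_, ?_⟩
  · have hcard : (N.image d).card = N.card := by
      apply Finset.card_image_of_injOn
      intro F hF G hG he
      by_contra hne
      have h0 := hM.2 F (Finset.mem_filter.1 hF).1 G (Finset.mem_filter.1 hG).1 hne
      have : d F ∈ F ∩ G := Finset.mem_inter.2 ⟨hd F hF, by
        have := hd G hG
        rwa [← show d F = d G from he] at this⟩
      rw [h0] at this
      simp at this
    rw [hcard]
    have hlt : (M.filter fun F => ¬ xMon K F ∈ P).card < k := by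
      by_contra hge
      push Not at hge
      obtain ⟨L, hL, hLk⟩ := Finset.exists_subset_card_eq hge
      have hLM : IsMatchingOf S L :=
        ⟨fun F hF => hM.1 (Finset.mem_filter.1 (hL hF)).1, fun F hF G hG =>
          hM.2 F (Finset.mem_filter.1 (hL hF)).1 G (Finset.mem_filter.1 (hL hG)).1⟩
      have hmem : xMon K (L.biUnion id) ∈ P := by
        apply hle
        apply Ideal.subset_span
        refine ⟨⟨_, rfl⟩, ?_⟩
        rw [xMon_biUnion K hLM, ← hLk]
        have := Ideal.prod_mem_prod (s := L) (I := fun _ => facetIdealOf K S)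
          (x := fun F => xMon K F)
          (fun F hF => Ideal.subset_span ⟨F, hLM.1 hF, rfl⟩)
        rwa [Finset.prod_const] at this
      rw [xMon_biUnion K hLM, hP.prod_mem_iff] at hmem
      obtain ⟨F, hF, hFP⟩ := hmem
      exact (Finset.mem_filter.1 (hL hF)).2 hFP
    have hsum := Finset.card_filter_add_card_filter_not (s := M) (fun F => xMon K F ∈ P)
    have : N.card = (M.filter fun F => xMon K F ∈ P).card := rfl
    split_ifs <;> omega
  · intro v hv
    obtain ⟨F, hF, rfl⟩ := Finset.mem_image.1 hv
    exact hdP F hF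

section Statements

variable {V : Type} [Fintype V] [DecidableEq V] (K : Type) [Field K]

theorem stmt3 (Δ : SimplicialComplexOn V)
    (hcov : ∀ v : V, ∃ F ∈ Δ.facets, v ∈ F)
    (hCM : IsCMForestFacets Δ.facets) :
    ∀ k : ℕ, 1 ≤ k → k ≤ matchingNumberOf Δ.facets →
      ringKrullDim (MvPolynomial V K ⧸ sqfreePow K (facetIdealOf K Δ.facets) k) =
        (((Fintype.card V - matchingNumberOf Δ.facets + k - 1 : ℕ) : ℕ∞) : WithBot ℕ∞) := by
  intro k hk hkν
  obtain ⟨M, hM, hMc⟩ := exists_max_matching Δ.facets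
  have hnV : Nonempty V := by
    obtain ⟨F, hF⟩ : M.Nonempty := Finset.card_pos.1 (by omega)
    obtain ⟨v, -⟩ := Δ.nonempty_facet F (hM.1 hF)
    exact ⟨v⟩
  obtain ⟨M', C, hM', hCM', hC⟩ := exists_matching_cover hCM.2 Δ.nonempty_facet Δ.antichain
  have hCν : C.card ≤ matchingNumberOf Δ.facets := hCM'.trans (matching_card_le hM')
  generalize hν : matchingNumberOf Δ.facets = ν at *
  have hνC : ν ≤ C.card := by
    rw [← hMc]
    have hex : ∀ F ∈ M, ∃ v, v ∈ F ∧ v ∈ C := by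
      intro F hF
      obtain ⟨v, hv⟩ := hC F (hM.1 hF)
      exact ⟨v, Finset.mem_inter.1 hv⟩
    choose! d hd hdC using hex
    refine Finset.card_le_card_of_injOn d hdC ?_
    intro F hF G hG he
    by_contra hne
    have h0 := hM.2 F hF G hG hne
    have : d F ∈ F ∩ G := Finset.mem_inter.2 ⟨hd F hF, by
      have := hd G hG
      rwa [← show d F = d G from he] at this⟩
    rw [h0] at this
    simp at this
  have hVC : C.card ≤ Fintype.card V := Finset.card_le_univ C
  have hnum : Fintype.card V - ν + k - 1 = Fintype.card V - (ν - k + 1) := by omega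
  rw [hnum]
  apply le_antisymm
  · apply dim_le
    intro P hP hle
    obtain ⟨D, hD, hX⟩ := prime_contains K hM hk P hP hle
    refine ⟨D, ?_, hX⟩
    rw [hMc, if_pos hkν] at hD
    exact hD
  · obtain ⟨D, hDC, hD⟩ := Finset.exists_subset_card_eq (s := C) (n := ν - k + 1) (by omega)
    rw [← hD]
    refine dim_ge K D _ _ rfl ?_
    rintro p ⟨⟨A, rfl⟩, hA⟩
    refine ⟨A, rfl, ?_⟩
    have h1 := xMon_mem_pow_card K hC hA
    by_contra hne
    rw [Finset.not_nonempty_iff_eq_empty] at hne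
    have hsub : A ∩ C ⊆ C \ D := by
      intro v hv
      rw [Finset.mem_inter] at hv
      rw [Finset.mem_sdiff]
      refine ⟨hv.2, fun hvD => ?_⟩
      have : v ∈ A ∩ D := Finset.mem_inter.2 ⟨hv.1, hvD⟩
      rw [hne] at this
      simp at this
    have h2 := Finset.card_le_card hsub
    rw [Finset.card_sdiff_of_subset hDC] at h2
    omega

end Statements
end

section
/- Let Δ be a Cohen-Macaulay simplicial forest on vertex set V(Δ) and let R = K[x_v : v ∈ V(Δ)] be a polynomial ring over a field K. Then for each 1 ≤ k ≤ ν(Δ), every minimal prime ideal of R containing I(Δ)^{[k]} has height at least ν(Δ) − k + 1, and there exists a minimal prime of I(Δ)^{[k]} of height exactly ν(Δ) − k + 1; consequently ht(I(Δ)^{[k]}) = ν(Δ) − k + 1. -/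
open MvPolynomial

variable {V : Type} [Fintype V] [DecidableEq V]

variable (K : Type) [Field K]

section Statements

variable {V : Type} [Fintype V] [DecidableEq V] (K : Type) [Field K]

/-- Height of an ideal: the minimum height of a prime containing it. -/
noncomputable def idealHeight {R : Type*} [CommRing R] (I : Ideal R) : ℕ∞ :=
  ⨅ p ∈ {p : PrimeSpectrum R | I ≤ p.asIdeal}, Order.height p

/-! ### Combinatorics of grafted complexes -/

/-- A leaf of an antichain of nonempty sets has a free vertex. -/
theorem leaf_free {S : Finset (Finset V)} (hne : ∀ F ∈ S, F.Nonempty)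
    (hac : ∀ F ∈ S, ∀ G ∈ S, F ⊆ G → F = G) {F : Finset V} (hF : IsLeafOf S F) :
    ∃ v ∈ F, ∀ H ∈ S, v ∈ H → H = F := by
  obtain ⟨hFS, h | ⟨G, hG, hGF, h⟩⟩ := hF
  · obtain ⟨v, hv⟩ := hne F hFS
    exact ⟨v, hv, fun H hH _ => h H hH⟩
  · have : ¬ F ⊆ G := fun hs => hGF (hac F hFS G hG hs).symm
    obtain ⟨v, hv, hvG⟩ := Finset.not_subset.1 this
    refine ⟨v, hv, fun H hH hvH => ?_⟩
    by_contra hne'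
    exact hvG (Finset.mem_inter.1 (h H hH hne' (Finset.mem_inter.2 ⟨hv, hvH⟩))).2

/-- A leaf stays a leaf after passing to a grafted subcollection containing it. -/
theorem leaf_persist {S T : Finset (Finset V)} (hne : ∀ F ∈ S, F.Nonempty)
    (hac : ∀ F ∈ S, ∀ G ∈ S, F ⊆ G → F = G) {F : Finset V} (hF : IsLeafOf S F)
    (hT : IsGrafted T) (hTS : T ⊆ S) (hFT : F ∈ T) : IsLeafOf T F := by
  obtain ⟨v, hv, hfree⟩ := leaf_free hne hac hF
  obtain ⟨_, Fs, Gs, hunion, hdisj, hcover, hleaves, hFdisj, hrec⟩ := hT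
  rw [hleaves]
  rw [hunion] at hFT
  rcases Finset.mem_union.1 hFT with h | h
  · exact h
  · obtain ⟨F', hF', hvF'⟩ := hcover F h v hv
    have : F' = F := hfree F' (hTS (hunion ▸ Finset.mem_union_left _ hF')) hvF'
    exact this ▸ hF'

/-- In a grafted collection the traces of the other facets on a leaf form a chain. -/
theorem leaf_chain {S : Finset (Finset V)} (hS : IsGrafted S) :
    (∀ F ∈ S, F.Nonempty) → (∀ F ∈ S, ∀ G ∈ S, F ⊆ G → F = G) →
    ∀ F, IsLeafOf S F → ∀ G ∈ S, ∀ G' ∈ S, G ≠ F → G' ≠ F →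
      F ∩ G ⊆ F ∩ G' ∨ F ∩ G' ⊆ F ∩ G := by
  induction hS with
  | intro S Fs Gs hunion hdisj hcover hleaves hFdisj hrec ih =>
    intro hne hac F hF G hG G' hG' hGF hG'F
    have hFFs := (hleaves F).1 hF
    by_cases h1 : G ∈ Fs
    · left
      rw [hFdisj F hFFs G h1 (Ne.symm hGF)]; exact Finset.empty_subset _
    by_cases h2 : G' ∈ Fs
    · right
      rw [hFdisj F hFFs G' h2 (Ne.symm hG'F)]; exact Finset.empty_subset _
    by_cases hex : ∃ H ∈ Gs, H ≠ G ∧ H ≠ G'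
    · obtain ⟨H, hH, hHG, hHG'⟩ := hex
      have hFH : F ≠ H := fun h => Finset.disjoint_left.1 hdisj hFFs (h ▸ hH)
      have hsub : S.erase H ⊆ S := Finset.erase_subset _ _
      have hFT : F ∈ S.erase H := Finset.mem_erase.2 ⟨hFH, hF.1⟩
      exact ih H hH (fun A hA => hne A (hsub hA))
        (fun A hA B hB => hac A (hsub hA) B (hsub hB)) F
        (leaf_persist hne hac hF (hrec H hH) hsub hFT)
        G (Finset.mem_erase.2 ⟨hHG.symm, hG⟩) G' (Finset.mem_erase.2 ⟨hHG'.symm, hG'⟩) hGF hG'F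
    · push Not at hex
      obtain ⟨_, h | ⟨J, hJ, hJF, h⟩⟩ := hF
      · exact absurd (h G hG) hGF
      · rw [hunion] at hJ
        rcases Finset.mem_union.1 hJ with hJ | hJ
        · left
          have := h G hG hGF
          rw [hFdisj F hFFs J hJ (Ne.symm hJF)] at this
          exact this.trans (Finset.empty_subset _)
        · by_cases hJG : J = G
          · right; exact hJG ▸ h G' hG' hG'F
          · left; exact (hex J hJ hJG) ▸ h G hG hGF

/-- A vertex of a leaf contained in every facet meeting the leaf. -/
theorem leaf_vertex {S : Finset (Finset V)} {F : Finset V} (hF : F.Nonempty)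
    (hch : ∀ G ∈ S, ∀ G' ∈ S, G ≠ F → G' ≠ F → F ∩ G ⊆ F ∩ G' ∨ F ∩ G' ⊆ F ∩ G) :
    ∃ v ∈ F, ∀ G ∈ S, (F ∩ G).Nonempty → v ∈ G := by
  by_cases hT : (S.filter fun G => G ≠ F ∧ (F ∩ G).Nonempty).Nonempty
  · obtain ⟨G, hG, hmin⟩ := Finset.exists_min_image _ (fun G => (F ∩ G).card) hT
    simp only [Finset.mem_filter] at hG hmin
    obtain ⟨hGS, hGF, v, hv⟩ := hG
    refine ⟨v, (Finset.mem_inter.1 hv).1, fun H hH hHne => ?_⟩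
    by_cases hHF : H = F
    · rw [hHF]; exact (Finset.mem_inter.1 hv).1
    · rcases hch G hGS H hH hGF hHF with h | h
      · exact (Finset.mem_inter.1 (h hv)).2
      · have := Finset.eq_of_subset_of_card_le h (hmin H ⟨hH, hHF, hHne⟩)
        rw [← this] at hv
        exact (Finset.mem_inter.1 hv).2
  · obtain ⟨v, hv⟩ := hF
    refine ⟨v, hv, fun H hH hHne => ?_⟩
    by_cases hHF : H = F
    · rw [hHF]; exact hv
    · exact absurd ⟨H, Finset.mem_filter.2 ⟨hH, hHF, hHne⟩⟩ hT

/-- A grafted collection has a matching `Fs` and a vertex cover of the same size. -/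
theorem grafted_core {S : Finset (Finset V)} (hS : IsGrafted S)
    (hne : ∀ F ∈ S, F.Nonempty) (hac : ∀ F ∈ S, ∀ G ∈ S, F ⊆ G → F = G) :
    ∃ Fs : Finset (Finset V), IsMatchingOf S Fs ∧
      ∃ C : Finset V, C.card = Fs.card ∧ ∀ G ∈ S, ∃ v ∈ C, v ∈ G := by
  have hchain := leaf_chain hS hne hac
  obtain ⟨_, Fs, Gs, hunion, hdisj, hcover, hleaves, hFdisj, hrec⟩ := hS
  have hsub : Fs ⊆ S := hunion ▸ Finset.subset_union_left
  refine ⟨Fs, ⟨hsub, hFdisj⟩, ?_⟩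
  have key : ∀ F : Finset V, F ∈ Fs → ∃ v : V,
      v ∈ F ∧ ∀ G ∈ S, (F ∩ G).Nonempty → v ∈ G := fun F hF =>
    leaf_vertex (hne F (hsub hF)) (hchain F ((hleaves F).2 hF))
  rcases Fs.eq_empty_or_nonempty with hFs | ⟨F0, hF0⟩
  · refine ⟨∅, by rw [hFs]; rfl, fun G hG => ?_⟩
    obtain ⟨v, hv⟩ := hne G hG
    rw [hunion, hFs, Finset.empty_union] at hG
    obtain ⟨F, hF, _⟩ := hcover G hG v hv
    rw [hFs] at hF
    exact absurd hF (Finset.notMem_empty _)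
  have : Nonempty V := ⟨(key F0 hF0).choose⟩
  choose! f hf using key
  refine ⟨Fs.image f, Finset.card_image_of_injOn ?_, ?_⟩
  · intro A hA B hB hAB
    by_contra hne'
    have h := hFdisj A hA B hB hne'
    have : f A ∈ A ∩ B := Finset.mem_inter.2 ⟨(hf A hA).1, by rw [hAB]; exact (hf B hB).1⟩
    rw [h] at this
    exact absurd this (Finset.notMem_empty _)
  · intro G hG
    have : ∃ F ∈ Fs, (F ∩ G).Nonempty := by
      obtain ⟨v, hv⟩ := hne G hG
      rw [hunion] at hG
      rcases Finset.mem_union.1 hG with h | h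
      · exact ⟨G, h, v, Finset.mem_inter.2 ⟨hv, hv⟩⟩
      · obtain ⟨F, hF, hvF⟩ := hcover G h v hv
        exact ⟨F, hF, v, Finset.mem_inter.2 ⟨hvF, hv⟩⟩
    obtain ⟨F, hF, hFG⟩ := this
    exact ⟨f F, Finset.mem_image_of_mem _ hF, (hf F hF).2 G hG hFG⟩

/-- A matching and a cover of equal size compute the matching number. -/
theorem matchingNumber_eq {S Fs : Finset (Finset V)} {C : Finset V}
    (hM : IsMatchingOf S Fs) (hC : C.card = Fs.card) (hcov : ∀ G ∈ S, ∃ v ∈ C, v ∈ G) :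
    matchingNumberOf S = Fs.card := by
  refine IsGreatest.csSup_eq ⟨⟨Fs, hM, rfl⟩, ?_⟩
  rintro n ⟨M, ⟨hMS, hMd⟩, rfl⟩
  rw [← hC]
  rcases S.eq_empty_or_nonempty with hS | ⟨G0, hG0⟩
  · rw [hS, Finset.subset_empty] at hMS
    rw [hMS]; simp
  have : Nonempty V := ⟨(hcov G0 hG0).choose⟩
  choose! g hg using hcov
  refine Finset.card_le_card_of_injOn g (fun G hG => (hg G (hMS hG)).1) ?_
  intro A hA B hB hAB
  by_contra hne'
  have : g A ∈ A ∩ B :=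
    Finset.mem_inter.2 ⟨(hg A (hMS hA)).2, by rw [hAB]; exact (hg B (hMS hB)).2⟩
  rw [hMd A hA B hB hne'] at this
  exact absurd this (Finset.notMem_empty _)

/-! ### Primes generated by variables -/

open Classical in
/-- The ideal generated by the variables indexed by `C`. -/
noncomputable def varIdeal (C : Finset V) : Ideal (MvPolynomial V K) :=
  Ideal.span ((C.image (X : V → MvPolynomial V K) : Finset (MvPolynomial V K)) :
    Set (MvPolynomial V K))


theorem X_mem_varIdeal {C : Finset V} {v : V} (hv : v ∈ C) :
    (X v : MvPolynomial V K) ∈ varIdeal K C := by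
  classical
  exact Ideal.subset_span (Finset.mem_coe.2 (Finset.mem_image_of_mem _ hv))

theorem varIdeal_le {C : Finset V} {P : Ideal (MvPolynomial V K)}
    (h : ∀ v ∈ C, (X v : MvPolynomial V K) ∈ P) : varIdeal K C ≤ P := by
  classical
  refine Ideal.span_le.2 ?_
  intro p hp
  obtain ⟨v, hv, rfl⟩ := Finset.mem_image.1 (Finset.mem_coe.1 hp)
  exact h v hv

/-- Setting the variables in `C` to zero. -/
noncomputable def killHom (C : Finset V) : MvPolynomial V K →ₐ[K] MvPolynomial V K :=
  aeval fun v => if v ∈ C then 0 else X v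

theorem varIdeal_eq_ker (C : Finset V) :
    varIdeal K C = RingHom.ker (killHom K C) := by
  apply le_antisymm
  · refine varIdeal_le K fun v hv => ?_
    simp [RingHom.mem_ker, killHom, hv]
  · intro p hp
    have h : (Ideal.Quotient.mkₐ K (varIdeal K C)).comp (killHom K C)
        = Ideal.Quotient.mkₐ K (varIdeal K C) := by
      apply MvPolynomial.algHom_ext
      intro v
      by_cases hv : v ∈ C
      · have : Ideal.Quotient.mk (varIdeal K C) (X v) = 0 :=
          Ideal.Quotient.eq_zero_iff_mem.2 (X_mem_varIdeal K hv)
        simp [killHom, hv, this]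
      · simp [killHom, hv]
    have h2 := DFunLike.congr_fun h p
    rw [AlgHom.comp_apply, (RingHom.mem_ker).1 hp, map_zero] at h2
    exact Ideal.Quotient.eq_zero_iff_mem.1 h2.symm

theorem varIdeal_isPrime (C : Finset V) : (varIdeal K C).IsPrime := by
  rw [varIdeal_eq_ker]
  exact RingHom.ker_isPrime _

theorem X_notMem_varIdeal {C : Finset V} {v : V} (hv : v ∉ C) :
    (X v : MvPolynomial V K) ∉ varIdeal K C := by
  rw [varIdeal_eq_ker, RingHom.mem_ker]
  simp [killHom, hv]

theorem le_height_varIdeal (C : Finset V) :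
    (C.card : ℕ∞) ≤
      Order.height (⟨varIdeal K C, varIdeal_isPrime K C⟩ : PrimeSpectrum (MvPolynomial V K)) := by
  induction C using Finset.induction_on with
  | empty => simp
  | insert a C ha ih =>
    rw [Finset.card_insert_of_notMem ha]
    push_cast
    refine (add_le_add_left ih 1).trans (Order.height_add_one_le ?_)
    refine lt_of_le_of_ne ?_ ?_
    · exact varIdeal_le K fun v hv => X_mem_varIdeal K (Finset.mem_insert_of_mem hv)
    · intro h
      have h' : varIdeal K C = varIdeal K (insert a C) := congrArg PrimeSpectrum.asIdeal h
      exact X_notMem_varIdeal K ha (h' ▸ X_mem_varIdeal K (Finset.mem_insert_self a C))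

theorem height_varIdeal_le (C : Finset V) :
    Order.height (⟨varIdeal K C, varIdeal_isPrime K C⟩ : PrimeSpectrum (MvPolynomial V K))
      ≤ (C.card : ℕ∞) := by
  classical
  have hp := varIdeal_isPrime K C
  rw [← PrimeSpectrum.height_eq_orderHeight]
  have h : varIdeal K C ∈ (varIdeal K C).minimalPrimes := by
    rw [Ideal.minimalPrimes_eq_subsingleton_self]; rfl
  refine (Ideal.height_le_card_of_mem_minimalPrimes_span_finset h).trans ?_
  exact_mod_cast Finset.card_image_le

/-! ### The two bounds -/

/-- If `C` covers `S`, any square-free monomial in `I(S)^k` has at least `k` variables in `C`. -/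
theorem card_inter_of_mem_pow {S : Finset (Finset V)} {C : Finset V}
    (hcov : ∀ G ∈ S, ∃ v ∈ C, v ∈ G) {k : ℕ} {A : Finset V}
    (hA : xMon K A ∈ facetIdealOf K S ^ k) : k ≤ (A ∩ C).card := by
  let φ : MvPolynomial V K →ₐ[K] Polynomial K :=
    aeval fun v => if v ∈ C then Polynomial.X else 1
  have hφ : ∀ B : Finset V, φ (xMon K B) = Polynomial.X ^ (B ∩ C).card := by
    intro B
    simp only [φ, xMon, map_prod, aeval_X]
    rw [Finset.prod_ite, Finset.prod_const, Finset.prod_const_one, mul_one,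
      Finset.filter_mem_eq_inter]
  have h1 : (facetIdealOf K S).map φ ≤ Ideal.span {Polynomial.X} := by
    rw [facetIdealOf, Ideal.map_span, Ideal.span_le]
    rintro _ ⟨_, ⟨F, hF, rfl⟩, rfl⟩
    obtain ⟨v, hv, hvF⟩ := hcov F hF
    refine Ideal.mem_span_singleton.2 ?_
    rw [hφ]
    exact dvd_pow_self _ (Finset.card_ne_zero_of_mem (Finset.mem_inter.2 ⟨hvF, hv⟩))
  have h2 : φ (xMon K A) ∈ Ideal.span {(Polynomial.X : Polynomial K)} ^ k := by
    refine Ideal.pow_right_mono h1 k ?_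
    rw [← Ideal.map_pow]
    exact Ideal.mem_map_of_mem _ hA
  rw [hφ, Ideal.span_singleton_pow, Ideal.mem_span_singleton] at h2
  exact (pow_dvd_pow_iff Polynomial.X_ne_zero Polynomial.not_isUnit_X).1 h2

theorem sqfreePow_le_varIdeal {S : Finset (Finset V)} {C D : Finset V}
    (hcov : ∀ G ∈ S, ∃ v ∈ C, v ∈ G) {k : ℕ} (hDC : D ⊆ C) (hD : C.card + 1 ≤ D.card + k) :
    sqfreePow K (facetIdealOf K S) k ≤ varIdeal K D := by
  refine Ideal.span_le.2 ?_
  rintro _ ⟨⟨A, rfl⟩, hA⟩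
  have h := card_inter_of_mem_pow K hcov hA
  have : ∃ v ∈ D, v ∈ A := by
    by_contra hcon
    push Not at hcon
    have hdis : Disjoint D (A ∩ C) :=
      Finset.disjoint_left.2 fun v hv hv' => hcon v hv (Finset.mem_inter.1 hv').1
    have h3 := Finset.card_le_card (Finset.union_subset hDC (Finset.inter_subset_right (s₁ := A)))
    rw [Finset.card_union_of_disjoint hdis] at h3
    omega
  obtain ⟨v, hvD, hvA⟩ := this
  exact Ideal.mem_of_dvd _ (Finset.dvd_prod_of_mem _ hvA) (X_mem_varIdeal K hvD)

theorem xMon_biUnion_mem {S M : Finset (Finset V)} (hM : IsMatchingOf S M) :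
    xMon K (M.biUnion id) = ∏ F ∈ M, xMon K F ∧
      xMon K (M.biUnion id) ∈ facetIdealOf K S ^ M.card := by
  have h : xMon K (M.biUnion id) = ∏ F ∈ M, xMon K F := by
    unfold xMon
    rw [Finset.prod_biUnion]
    · rfl
    · intro A hA B hB hAB
      exact Finset.disjoint_iff_inter_eq_empty.2 (hM.2 A hA B hB hAB)
  refine ⟨h, ?_⟩
  rw [h, ← Finset.prod_const]
  exact Ideal.prod_mem_prod fun F hF => Ideal.subset_span ⟨F, hM.1 hF, rfl⟩

theorem le_height_of_sqfreePow_le {S M : Finset (Finset V)} (hM : IsMatchingOf S M) {k : ℕ}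
    (hk : 1 ≤ k) (hkM : k ≤ M.card)
    (p : PrimeSpectrum (MvPolynomial V K)) (hp : sqfreePow K (facetIdealOf K S) k ≤ p.asIdeal) :
    ((M.card - k + 1 : ℕ) : ℕ∞) ≤ Order.height p := by
  classical
  let N := M.filter fun F => xMon K F ∈ p.asIdeal
  let N' := M.filter fun F => xMon K F ∉ p.asIdeal
  have hNN : N.card + N'.card = M.card := Finset.card_filter_add_card_filter_not _
  have hN' : N'.card < k := by
    by_contra hcon
    push Not at hcon
    obtain ⟨Q, hQ, hQk⟩ := Finset.exists_subset_card_eq hcon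
    have hQM : Q ⊆ M := hQ.trans (Finset.filter_subset _ _)
    obtain ⟨h1, h2⟩ := xMon_biUnion_mem K
      (M := Q) (S := S) ⟨hQM.trans hM.1, fun A hA B hB => hM.2 A (hQM hA) B (hQM hB)⟩
    rw [hQk] at h2
    have h3 := hp (Ideal.subset_span ⟨⟨_, rfl⟩, h2⟩)
    rw [h1] at h3
    obtain ⟨F, hF, hFp⟩ := (p.isPrime.prod_mem_iff).1 h3
    exact (Finset.mem_filter.1 (hQ hF)).2 hFp
  have key : ∀ F : Finset V, F ∈ N → ∃ v : V, v ∈ F ∧ (X v : MvPolynomial V K) ∈ p.asIdeal := by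
    intro F hF
    have h := (Finset.mem_filter.1 hF).2
    unfold xMon at h
    obtain ⟨v, hv, hvp⟩ := (p.isPrime.prod_mem_iff).1 h
    exact ⟨v, hv, hvp⟩
  have hNne : N.Nonempty := by
    rw [← Finset.card_pos]; omega
  have : Nonempty V := ⟨(key _ hNne.choose_spec).choose⟩
  choose! f hf using key
  have hcard : (N.image f).card = N.card := by
    refine Finset.card_image_of_injOn ?_
    intro A hA B hB hAB
    by_contra hne'
    have hAM := (Finset.mem_filter.1 hA).1
    have hBM := (Finset.mem_filter.1 hB).1
    have : f A ∈ A ∩ B := Finset.mem_inter.2 ⟨(hf A hA).1, by rw [hAB]; exact (hf B hB).1⟩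
    rw [hM.2 A hAM B hBM hne'] at this
    exact absurd this (Finset.notMem_empty _)
  have hle : (⟨varIdeal K (N.image f), varIdeal_isPrime K _⟩ :
      PrimeSpectrum (MvPolynomial V K)) ≤ p := by
    refine varIdeal_le K fun v hv => ?_
    obtain ⟨F, hF, rfl⟩ := Finset.mem_image.1 hv
    exact (hf F hF).2
  refine le_trans ?_ ((le_height_varIdeal K (N.image f)).trans (Order.height_mono hle))
  rw [hcard]
  have : M.card - k + 1 ≤ N.card := by omega
  exact_mod_cast this

theorem stmt4 (Δ : SimplicialComplexOn V)
    (hcov : ∀ v : V, ∃ F ∈ Δ.facets, v ∈ F)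
    (hCM : IsCMForestFacets Δ.facets) :
    ∀ k : ℕ, 1 ≤ k → k ≤ matchingNumberOf Δ.facets →
      (∀ p ∈ (sqfreePow K (facetIdealOf K Δ.facets) k).minimalPrimes,
        ∀ hp : p.IsPrime,
          ((matchingNumberOf Δ.facets - k + 1 : ℕ) : ℕ∞) ≤
            Order.height (⟨p, hp⟩ : PrimeSpectrum (MvPolynomial V K))) ∧
      (∃ p, ∃ hp : p.IsPrime, p ∈ (sqfreePow K (facetIdealOf K Δ.facets) k).minimalPrimes ∧
          Order.height (⟨p, hp⟩ : PrimeSpectrum (MvPolynomial V K)) =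
            ((matchingNumberOf Δ.facets - k + 1 : ℕ) : ℕ∞)) ∧
      idealHeight (sqfreePow K (facetIdealOf K Δ.facets) k) =
        ((matchingNumberOf Δ.facets - k + 1 : ℕ) : ℕ∞) := by
  intro k hk1 hk
  obtain ⟨Fs, hM, C, hC, hcovC⟩ := grafted_core hCM.2 Δ.nonempty_facet Δ.antichain
  rw [matchingNumber_eq hM hC hcovC] at hk ⊢
  have hlow := le_height_of_sqfreePow_le K hM hk1 hk
  obtain ⟨D, hDC, hD⟩ := Finset.exists_subset_card_eq
    (show Fs.card - k + 1 ≤ C.card by omega)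
  have hle := sqfreePow_le_varIdeal K (k := k) hcovC hDC (by omega)
  have hprime := varIdeal_isPrime K D
  obtain ⟨q, hq, hqD⟩ := Ideal.exists_minimalPrimes_le hle
  have hqp : q.IsPrime := hq.1.1
  have hqh : Order.height (⟨q, hqp⟩ : PrimeSpectrum (MvPolynomial V K)) =
      ((Fs.card - k + 1 : ℕ) : ℕ∞) := by
    refine le_antisymm ?_ (hlow ⟨q, hqp⟩ hq.1.2)
    have hqD' : (⟨q, hqp⟩ : PrimeSpectrum (MvPolynomial V K)) ≤ ⟨varIdeal K D, hprime⟩ := hqD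
    refine (Order.height_mono hqD').trans ?_
    rw [← hD]
    exact height_varIdeal_le K D
  refine ⟨fun p hp hpp => hlow ⟨p, hpp⟩ hp.1.2, ⟨q, hqp, hq, hqh⟩, ?_⟩
  apply le_antisymm
  · rw [← hqh]
    exact iInf₂_le (⟨q, hqp⟩ : PrimeSpectrum (MvPolynomial V K)) hq.1.2
  · exact le_iInf₂ fun p hp => hlow p hp

end Statements
end
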